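/- arXiv:1608.06975 — 2 statements merged into one kernel-verified Lean document; each statement's English description precedes it below -/
import Mathlib

section
/- Suppose 0 ≤ h < 1 and let α = arccos h ∈ (0, π/2]. Then ℰ_h(1) = ℰ_h(α/π) + ℰ_h(1 − α/π), and the infimum ℰ_h(1) is not attained: there is no φ ∈ 𝒜_h(1) with E_h(φ) = ℰ_h(1). -/
/-!
Put `u = cos φ - h`, so that the energy is made of `φ'²`, `u²` and the nonlocal density
`(u(s) - u(t))² / (s - t)²`.

*Lower bound.* A phase of degree one is split into the part where `u > 0` and the part where `u < 0`.
The triangle wave `tri` keeps the cosine and has slope `±1`, so following `φ` by `tri` and then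
saturating at `±α` gives a phase of degree `α/π` whose cosine is `max (cos φ) h`; the same operation
on `φ - π` with `π - α` gives a phase of degree `1 - α/π` whose cosine, up to sign, is
`min (cos φ) h`. To keep the phases `C¹`, the saturation is carried out by a smooth profile of slope
at most `c > 1` (`exists_profile`), which costs a factor `c⁴` in energy (`exists_fold`). The local
energies of the two parts add up to at most that of `φ`, whereas in the nonlocal term
`(u⁺(s) - u⁺(t))² + (u⁻(s) - u⁻(t))² = (u(s) - u(t))² - 2 (u⁺(s) u⁻(t) + u⁻(s) u⁺(t))`
(`split_identity`). The interaction term that is lost does not depend on `c`, and it is positive,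
since a phase of degree one takes both signs of `u` (`gap_pos_of_mem`). Letting `c → 1` yields
`ℰ_h(α/π) + ℰ_h(1 - α/π) + gap(φ) ≤ E_h(φ)` (`lower_bound`, `le_of_forall_const`): this is one
inequality, and it excludes minimizers once equality of the infima is known.

*Upper bound.* The smooth profile is constant near its saturation values, so folding also makes
phases of degree `α/π` and `1 - α/π` constant outside a bounded interval at the cost of a factor
`c⁴` (`cutoff_small`, `cutoff_large`). Two such phases can be glued at distance `2N`, and the
interaction is `O(N⁻²)` (`glue`).
-/

open Real MeasureTheory Filter Topology
open scoped ENNReal NNReal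

noncomputable section

/-- `k = min {h, 1}`. -/
def kparam (h : ℝ) : ℝ := min h 1

/-- `α = arccos k ∈ [0, π/2]`. -/
def alphaParam (h : ℝ) : ℝ := Real.arccos (kparam h)

/-- The anisotropy potential `W_h(θ) = (1/2)(cos²θ − 2h cos θ + 2hk − k²)`. -/
def Wpot (h θ : ℝ) : ℝ :=
  (1/2) * ((Real.cos θ)^2 - 2*h*Real.cos θ + 2*h*(kparam h) - (kparam h)^2)

/-- The set `2πℤ + {−α, α}` of allowed limits at `±∞`. -/
def limSet (h : ℝ) : Set ℝ :=
  {y | ∃ n : ℤ, y = 2*Real.pi*n + alphaParam h ∨ y = 2*Real.pi*n - alphaParam h}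

/-- The total energy `E_h(φ)`, valued in `[0, ∞]`:
exchange + anisotropy energy plus the stray-field (homogeneous `H^{1/2}`) energy. -/
def energy (h : ℝ) (φ : ℝ → ℝ) : ℝ≥0∞ :=
  ENNReal.ofReal (1/2) *
      (∫⁻ x : ℝ, ENNReal.ofReal ((deriv φ x)^2 + 2 * Wpot h (φ x))) +
    ENNReal.ofReal (1/(4*Real.pi)) *
      (∫⁻ s : ℝ, ∫⁻ t : ℝ,
        ENNReal.ofReal ((Real.cos (φ s) - Real.cos (φ t))^2 / (s - t)^2))

/-- An admissible phase: `C¹`, limits at `±∞` in `2πℤ + {−α, α}`, finite energy. -/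
def Admissible (h : ℝ) (φ : ℝ → ℝ) : Prop :=
  ContDiff ℝ 1 φ ∧
    (∃ L ∈ limSet h, Tendsto φ atTop (𝓝 L)) ∧
    (∃ L ∈ limSet h, Tendsto φ atBot (𝓝 L)) ∧
    energy h φ < ⊤

/-- The winding number `deg(φ) = (φ(+∞) − φ(−∞))/(2π)`. -/
def deg (φ : ℝ → ℝ) : ℝ :=
  (limUnder atTop φ - limUnder atBot φ) / (2*Real.pi)

/-- `𝒜_h(d)`: admissible phases of winding number `d`. -/
def AA (h d : ℝ) : Set (ℝ → ℝ) := {φ | Admissible h φ ∧ deg φ = d}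

/-- `ℰ_h(d) = inf {E_h(φ) : φ ∈ 𝒜_h(d)}`. -/
def Einf (h d : ℝ) : ℝ≥0∞ := ⨅ φ ∈ AA h d, energy h φ

/-- `D_α = {n + j·α/π : n ∈ ℤ, j ∈ {−1, 0, 1}}`. -/
def Dset (h : ℝ) : Set ℝ :=
  {d | ∃ n j : ℤ, (j = -1 ∨ j = 0 ∨ j = 1) ∧ d = n + j * alphaParam h / Real.pi}

/-! ### A smooth saturating profile -/

/-- A smooth saturating profile: for every slope `c > 1` there is an odd nondecreasing `C¹` function `K`
with slope at most `c` that lies above the identity on `[0, β]` and equals `β` on `[b, ∞)` for some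
`b < β`. It is the primitive of an even cut-off function `k`, decreasing in `|s|`, so that it is
concave on `[0, ∞)`. -/
lemma exists_profile (β c : ℝ) (hβ : 0 < β) (hc : 1 < c) :
    ∃ K : ℝ → ℝ, ∃ b : ℝ, 0 < b ∧ b < β ∧ ContDiff ℝ 1 K ∧ (∀ u, K (-u) = -K u) ∧
      (∀ u, |deriv K u| ≤ c) ∧ (∀ u, b ≤ u → K u = β) ∧
      (∀ u, 0 ≤ u → u ≤ β → u ≤ K u) ∧
      (∀ u v, v ≤ u → 0 ≤ K u - K v ∧ K u - K v ≤ c * (u - v)) := by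
  have hc0 : 0 < c := by linarith
  obtain ⟨a, ha⟩ : ∃ a, a = β / c := ⟨_, rfl⟩
  have hac : a * c = β := by rw [ha]; field_simp
  have ha0 : 0 < a := by rw [ha]; positivity
  have haβ : a < β := by nlinarith
  obtain ⟨b, hb⟩ : ∃ b, b = (a + β) / 2 := ⟨_, rfl⟩
  have hab : a < b := by linarith
  have hbβ : b < β := by linarith
  have hb0 : 0 < b := by linarith
  have hba : 0 < b - a := by linarith
  -- `k0` is the plateau function equal to `1` for `|s| ≤ a` and to `0` for `|s| ≥ b`, where
  -- `a = β / c`; its multiple `k` has integral exactly `β` over `[0, b]`. As that integral of `k0`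
  -- is at least `a`, the factor `M` is at most `β / a = c`.
  let k0 : ℝ → ℝ := fun s => max 0 (min 1 ((b - |s|) / (b - a)))
  have k0c : Continuous k0 := by
    have : Continuous fun s : ℝ => (b - |s|) / (b - a) := by fun_prop
    exact continuous_const.max (continuous_const.min this)
  have k0nn : ∀ s, 0 ≤ k0 s := fun s => le_max_left _ _
  have k0le : ∀ s, k0 s ≤ 1 := fun s => max_le zero_le_one (min_le_left _ _)
  have k0one : ∀ s, |s| ≤ a → k0 s = 1 := by
    intro s hs
    have : 1 ≤ (b - |s|) / (b - a) := by rw [le_div_iff₀ hba]; linarith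
    simp [k0, this]
  have k0zero : ∀ s, b ≤ |s| → k0 s = 0 := by
    intro s hs
    have : (b - |s|) / (b - a) ≤ 0 := div_nonpos_of_nonpos_of_nonneg (by linarith) hba.le
    simp only [k0]
    exact max_eq_left ((min_le_right _ _).trans this)
  have k0anti : ∀ s t, |s| ≤ |t| → k0 t ≤ k0 s := by
    intro s t hst
    have : (b - |t|) / (b - a) ≤ (b - |s|) / (b - a) := by gcongr
    exact max_le_max le_rfl (min_le_min le_rfl this)
  have ii : ∀ x y : ℝ, IntervalIntegrable k0 volume x y := fun x y => k0c.intervalIntegrable x y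
  obtain ⟨I, hI⟩ : ∃ I, I = ∫ s in (0:ℝ)..b, k0 s := ⟨_, rfl⟩
  have hIb : I ≤ b := by
    have := intervalIntegral.integral_mono_on hb0.le (ii 0 b)
      (intervalIntegrable_const (c := (1:ℝ))) (fun x _ => k0le x)
    rw [hI]; simpa using this
  have hIa : a ≤ I := by
    have h1 : ∫ s in (0:ℝ)..a, k0 s = ∫ s in (0:ℝ)..a, (1:ℝ) := by
      apply intervalIntegral.integral_congr
      intro x hx
      rw [Set.uIcc_of_le ha0.le] at hx
      exact k0one x (by rw [abs_of_nonneg hx.1]; exact hx.2)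
    have h2 := intervalIntegral.integral_add_adjacent_intervals (ii 0 a) (ii a b)
    have h3 : 0 ≤ ∫ s in a..b, k0 s :=
      intervalIntegral.integral_nonneg hab.le (fun x _ => k0nn x)
    rw [h1] at h2
    simp at h2
    linarith
  have hI0 : 0 < I := by linarith
  obtain ⟨M, hM⟩ : ∃ M, M = β / I := ⟨_, rfl⟩
  have hMI : M * I = β := by rw [hM]; field_simp
  have hM0 : 0 < M := by rw [hM]; positivity
  have hMc : M ≤ c := by
    rw [hM, div_le_iff₀ hI0]; nlinarith
  let k : ℝ → ℝ := fun s => M * k0 s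
  have kc : Continuous k := continuous_const.mul k0c
  have ki : ∀ x y : ℝ, IntervalIntegrable k volume x y := fun x y => kc.intervalIntegrable x y
  have knn : ∀ s, 0 ≤ k s := fun s => mul_nonneg hM0.le (k0nn s)
  have kle : ∀ s, k s ≤ c := fun s => by
    have := k0le s
    have : M * k0 s ≤ M * 1 := by gcongr
    simp only [k]; linarith
  let K : ℝ → ℝ := fun u => ∫ s in (0:ℝ)..u, k s
  have hsub : ∀ u v, K u - K v = ∫ s in v..u, k s := fun u v =>
    intervalIntegral.integral_interval_sub_left (ki 0 u) (ki 0 v)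
  have hder : ∀ u, HasDerivAt K (k u) u := fun u => kc.integral_hasStrictDerivAt 0 u |>.hasDerivAt
  have hderiv : deriv K = k := funext fun u => (hder u).deriv
  have hKb : ∀ u, b ≤ u → K u = β := by
    intro u hu
    have h1 := hsub u b
    have h2 : ∫ s in b..u, k s = ∫ s in b..u, (0:ℝ) := by
      apply intervalIntegral.integral_congr
      intro x hx
      rw [Set.uIcc_of_le hu] at hx
      simp only [k]
      rw [k0zero x (by rw [abs_of_nonneg (hb0.le.trans hx.1)]; exact hx.1), mul_zero]
    have h3 : K b = β := by
      simp only [K, k]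
      rw [intervalIntegral.integral_const_mul, ← hI, hMI]
    rw [h2] at h1
    simp at h1
    linarith
  refine ⟨K, b, hb0, hbβ, ?_, ?_, ?_, hKb, ?_, ?_⟩
  · rw [contDiff_one_iff_deriv]
    exact ⟨fun u => (hder u).differentiableAt, by rw [hderiv]; exact kc⟩
  · intro u
    have h1 : K (-u) = ∫ s in (0:ℝ)..(-u), k (-s) := by
      simp only [K]
      apply intervalIntegral.integral_congr
      intro s _
      simp [k, k0]
    rw [h1, intervalIntegral.integral_comp_neg]
    simp only [neg_neg, neg_zero, K]
    rw [intervalIntegral.integral_symm]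
  · intro u
    rw [hderiv, abs_of_nonneg (knn u)]
    exact kle u
  -- If `k u ≥ 1`, then `k ≥ 1` on `[0, u]` and integration from `0` gives `u ≤ K u`; otherwise
  -- `k ≤ 1` on `[u, β]` and integration back from `K β = β` gives the same inequality.
  · intro u hu huβ
    rcases le_total 1 (k u) with h | h
    · have := intervalIntegral.integral_mono_on hu
        (intervalIntegrable_const (μ := volume) (c := (1:ℝ))) (ki 0 u) (fun x hx => by
          refine h.trans ?_
          have := k0anti x u (by rw [abs_of_nonneg hx.1, abs_of_nonneg hu]; exact hx.2)
          simp only [k]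
          gcongr)
      simpa using this
    · have h1 := hsub β u
      have := intervalIntegral.integral_mono_on huβ (ki u β)
        (intervalIntegrable_const (μ := volume) (c := (1:ℝ))) (fun x hx => by
          refine le_trans ?_ h
          have := k0anti u x (by
            rw [abs_of_nonneg hu, abs_of_nonneg (hu.trans hx.1)]; exact hx.1)
          simp only [k]
          gcongr)
      rw [← h1, hKb β hbβ.le] at this
      simp at this
      linarith
  · intro u v hvu
    rw [hsub]
    refine ⟨intervalIntegral.integral_nonneg hvu (fun x _ => knn x), ?_⟩
    have := intervalIntegral.integral_mono_on hvu (ki v u)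
        (intervalIntegrable_const (μ := volume) (c := c)) (fun x _ => kle x)
    simp at this
    linarith

/-- For `X ≤ x ≤ c X`, concavity on `[0, π]` and `sin 0 = 0` give `(X / x) sin x ≤ sin X`. -/
lemma sin_le_mul_sin {c x X : ℝ} (hX : 0 ≤ X) (hXx : X ≤ x) (hx : x ≤ c * X)
    (hxπ : x ≤ π) : Real.sin x ≤ c * Real.sin X := by
  rcases hX.eq_or_lt with rfl | hX0
  · have : x = 0 := by linarith
    simp [this]
  have hx0 : 0 < x := by linarith
  have h := strictConcaveOn_sin_Icc.concaveOn.2 (show (0:ℝ) ∈ Set.Icc 0 π from ⟨le_rfl, pi_pos.le⟩)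
    (show x ∈ Set.Icc 0 π from ⟨hx0.le, hxπ⟩) 
    (show 0 ≤ 1 - X / x by rw [sub_nonneg, div_le_one hx0]; exact hXx)
    (show 0 ≤ X / x by positivity) (by ring)
  have e : X / x * x = X := by field_simp
  simp only [smul_eq_mul, Real.sin_zero, mul_zero, zero_add, e] at h
  have hs : 0 ≤ Real.sin x := Real.sin_nonneg_of_nonneg_of_le_pi hx0.le hxπ
  have hc : 0 ≤ c := by
    by_contra hc
    push Not at hc
    nlinarith
  have h2 : 1 ≤ c * (X / x) := by
    rw [← mul_div_assoc, le_div_iff₀ hx0]; linarith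
  calc Real.sin x = 1 * Real.sin x := by ring
    _ ≤ c * (X / x) * Real.sin x := by gcongr
    _ = c * (X / x * Real.sin x) := by ring
    _ ≤ c * Real.sin X := by gcongr

/-- Composition with a profile `K` distorts cosines on `[0, β]` by at most the factor `c²`: writing the
difference of cosines as `-2 sin ((u + v) / 2) sin ((u - v) / 2)`, each sine grows by at most the
factor `c`. The bound `u ≤ K u` is what controls the first sine where it is decreasing. -/
lemma cos_profile_aux {β c : ℝ} (hβπ : β < π) (hc : 1 < c) {K : ℝ → ℝ}
    (hKβ : ∀ u, u ≤ β → K u ≤ β) (h0 : ∀ u, 0 ≤ u → K u ≤ c * u)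
    (hge : ∀ u, 0 ≤ u → u ≤ β → u ≤ K u)
    (hlip : ∀ u v, v ≤ u → 0 ≤ K u - K v ∧ K u - K v ≤ c * (u - v))
    {u v : ℝ} (hv : 0 ≤ v) (hvu : v ≤ u) (hu : u ≤ β) :
    |Real.cos (K u) - Real.cos (K v)| ≤ c ^ 2 * |Real.cos u - Real.cos v| := by
  have hu0 := hv.trans hvu
  obtain ⟨l1, l2⟩ := hlip u v hvu
  have a1 := hge u hu0 hu
  have a2 := hge v hv (hvu.trans hu)
  have a3 := h0 u hu0
  have a4 := h0 v hv
  have a5 := hKβ u hu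
  have a6 := hKβ v (hvu.trans hu)
  have s1 : Real.sin ((K u + K v) / 2) ≤ c * Real.sin ((u + v) / 2) :=
    sin_le_mul_sin (by linarith) (by linarith) (by linarith) (by linarith)
  have p2 : 0 ≤ Real.sin ((u - v) / 2) :=
    Real.sin_nonneg_of_nonneg_of_le_pi (by linarith) (by linarith)
  have s2 : Real.sin ((K u - K v) / 2) ≤ c * Real.sin ((u - v) / 2) := by
    rcases le_total ((u - v) / 2) ((K u - K v) / 2) with h | h
    · exact sin_le_mul_sin (by linarith) h (by linarith) (by linarith)
    · have := Real.sin_le_sin_of_le_of_le_pi_div_two (by linarith) (by linarith) h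
      nlinarith
  have p1 : 0 ≤ Real.sin ((u + v) / 2) :=
    Real.sin_nonneg_of_nonneg_of_le_pi (by linarith) (by linarith)
  have q1 : 0 ≤ Real.sin ((K u + K v) / 2) :=
    Real.sin_nonneg_of_nonneg_of_le_pi (by linarith) (by linarith)
  have q2 : 0 ≤ Real.sin ((K u - K v) / 2) :=
    Real.sin_nonneg_of_nonneg_of_le_pi (by linarith) (by linarith)
  rw [Real.cos_sub_cos, Real.cos_sub_cos, abs_mul, abs_mul, abs_mul, abs_mul, abs_of_nonneg p1,
    abs_of_nonneg p2, abs_of_nonneg q1, abs_of_nonneg q2]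
  norm_num
  have hc0 : 0 ≤ c := by linarith
  have := mul_le_mul s1 s2 q2 (by positivity)
  nlinarith

/-! ### The triangle wave and folding of phases -/

/-- The `4π`-periodic triangle wave of slope `±1` that vanishes at `2πℤ`, with corners at odd
multiples of `π`. It keeps the cosine and takes values in `[-π, π]`; its sign is the sign of
`sin (y / 2)`. -/
def tri (y : ℝ) : ℝ := 2 * Real.arcsin (Real.sin (y / 2))

lemma cos_tri (y : ℝ) : Real.cos (tri y) = Real.cos y := by
  have h : Real.sin (Real.arcsin (Real.sin (y / 2))) = Real.sin (y / 2) :=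
    Real.sin_arcsin (Real.neg_one_le_sin _) (Real.sin_le_one _)
  have h2 : y = 2 * (y / 2) := by ring
  rw [tri, Real.cos_two_mul, Real.cos_sq', h]
  conv_rhs => rw [h2, Real.cos_two_mul, Real.cos_sq']

lemma abs_tri_le (y : ℝ) : |tri y| ≤ π := by
  have h1 := Real.arcsin_le_pi_div_two (Real.sin (y / 2))
  have h2 := Real.neg_pi_div_two_le_arcsin (Real.sin (y / 2))
  rw [abs_le, tri]
  constructor <;> linarith

lemma continuous_tri : Continuous tri := by
  unfold tri
  exact continuous_const.mul (Real.continuous_arcsin.comp (Real.continuous_sin.comp (by fun_prop)))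

lemma cos_abs_tri (y : ℝ) : Real.cos |tri y| = Real.cos y := by
  rw [Real.cos_abs, cos_tri]

lemma cos_min_tri {β : ℝ} (h0 : 0 ≤ β) (hβ : β ≤ π) (y : ℝ) :
    Real.cos (min |tri y| β) = max (Real.cos y) (Real.cos β) := by
  rw [← cos_abs_tri y]
  rcases le_total (|tri y|) β with h | h
  · rw [min_eq_left h, max_eq_left (Real.cos_le_cos_of_nonneg_of_le_pi (abs_nonneg _) hβ h)]
  · rw [min_eq_right h, max_eq_right (Real.cos_le_cos_of_nonneg_of_le_pi h0 (abs_tri_le y) h)]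

/-- Away from its corners, the triangle wave is `C¹` with slope at most `1` in absolute value. -/
lemma tri_smooth {y : ℝ} (hy : -1 < Real.cos y) :
    ContDiffAt ℝ 1 tri y ∧ |deriv tri y| ≤ 1 := by
  have hsq : Real.sin (y / 2) ^ 2 < 1 := by
    have h2 : y = 2 * (y / 2) := by ring
    rw [h2, Real.cos_two_mul, Real.cos_sq'] at hy
    nlinarith
  have hn : Real.sin (y / 2) ≠ -1 := by rintro h; rw [h] at hsq; norm_num at hsq
  have hp : Real.sin (y / 2) ≠ 1 := by rintro h; rw [h] at hsq; norm_num at hsq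
  constructor
  · unfold tri
    have h1 : ContDiffAt ℝ 1 (fun z : ℝ => Real.sin (z / 2)) y :=
      (Real.contDiff_sin.comp (contDiff_id.div_const 2)).contDiffAt
    have h2 : ContDiffAt ℝ 1 Real.arcsin (Real.sin (y / 2)) := Real.contDiffAt_arcsin hn hp
    exact contDiffAt_const.mul (ContDiffAt.comp (g := Real.arcsin) y h2 h1)
  · have h1 : HasDerivAt (fun z : ℝ => Real.sin (z / 2)) (Real.cos (y / 2) * (1 / 2)) y :=
      ((hasDerivAt_id y).div_const 2).sin
    have h2 := (HasDerivAt.comp (h₂ := Real.arcsin) y (Real.hasDerivAt_arcsin hn hp) h1).const_mul 2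
    have h3 : deriv tri y = 2 * (1 / √(1 - Real.sin (y / 2) ^ 2) * (Real.cos (y / 2) * (1 / 2))) :=
      h2.deriv
    rw [h3, ← Real.cos_sq', Real.sqrt_sq_eq_abs]
    have : 2 * (1 / |Real.cos (y / 2)| * (Real.cos (y / 2) * (1 / 2)))
      = Real.cos (y / 2) / |Real.cos (y / 2)| := by ring
    rw [this, abs_div, abs_abs]
    exact div_self_le_one _

/-- Folding. The phase `ψ = ± K ∘ tri ∘ φ` runs from `-β` to `β`, is constant outside a bounded interval,
and is stationary wherever `cos φ ≤ cos β`; up to the factor `c⁴`, its energy densities are bounded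
by those belonging to the truncation `max (cos φ) (cos β)`. The hypothesis `hs` says that the triangle
wave takes opposite signs at the two limits. -/
lemma exists_fold (β c : ℝ) (hβ : 0 < β) (hβπ : β < π) (hc : 1 < c)
    (φ : ℝ → ℝ) (hφ : ContDiff ℝ 1 φ) (lm lp : ℝ)
    (hm : Tendsto φ atBot (𝓝 lm)) (hp : Tendsto φ atTop (𝓝 lp))
    (clm : Real.cos lm = Real.cos β) (clp : Real.cos lp = Real.cos β)
    (hs : Real.sin (lm / 2) * Real.sin (lp / 2) < 0) :
    ∃ ψ : ℝ → ℝ, ContDiff ℝ 1 ψ ∧ (∃ A, ∀ x, (x ≤ -A → ψ x = -β) ∧ (A ≤ x → ψ x = β)) ∧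
      (∀ x, (deriv ψ x) ^ 2 ≤ c ^ 4 * (deriv φ x) ^ 2) ∧
      (∀ x, Real.cos (φ x) ≤ Real.cos β → deriv ψ x = 0) ∧
      (∀ x, (Real.cos (ψ x) - Real.cos β) ^ 2 ≤
        c ^ 4 * (max (Real.cos (φ x)) (Real.cos β) - Real.cos β) ^ 2) ∧
      (∀ s t, (Real.cos (ψ s) - Real.cos (ψ t)) ^ 2 ≤
        c ^ 4 * (max (Real.cos (φ s)) (Real.cos β) - max (Real.cos (φ t)) (Real.cos β)) ^ 2) := by
  obtain ⟨K, b, hb0, hbβ, hKC, hodd, hKd, hKb, hge, hlip⟩ := exists_profile β c hβ hc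
  have hK0 : K 0 = 0 := by have := hodd 0; simp at this; linarith
  have hKle : ∀ u, K u ≤ β := by
    intro u
    have h1 := (hlip (max u b) u (le_max_left _ _)).1
    rw [hKb _ (le_max_right _ _)] at h1
    linarith
  have hKge : ∀ u, -β ≤ K u := by
    intro u
    have h1 := hKle (-u)
    rw [hodd] at h1
    linarith
  have hKabs : ∀ u, Real.cos (K u) = Real.cos (K |u|) := by
    intro u
    rcases abs_choice u with h | h <;> rw [h]
    rw [hodd, Real.cos_neg]
  have hKmin : ∀ u, K (min u β) = K u := by
    intro u
    rcases le_total u β with h | h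
    · rw [min_eq_left h]
    · rw [min_eq_right h, hKb β hbβ.le, hKb u (hbβ.le.trans h)]
  have hKlin : ∀ u, 0 ≤ u → K u ≤ c * u := by
    intro u hu
    have := (hlip u 0 hu).2
    rw [hK0] at this
    simpa using this
  have aux : ∀ u v, 0 ≤ u → u ≤ β → 0 ≤ v → v ≤ β →
      |Real.cos (K u) - Real.cos (K v)| ≤ c ^ 2 * |Real.cos u - Real.cos v| := by
    intro u v hu huβ hv hvβ
    rcases le_total v u with h | h
    · exact cos_profile_aux hβπ hc (fun u _ => hKle u) hKlin hge hlip hv h huβ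
    · rw [abs_sub_comm, abs_sub_comm (Real.cos u)]
      exact cos_profile_aux hβπ hc (fun u _ => hKle u) hKlin hge hlip hu h hvβ
  have auxt : ∀ y z, |Real.cos (K (tri y)) - Real.cos (K (tri z))| ≤
      c ^ 2 * |max (Real.cos y) (Real.cos β) - max (Real.cos z) (Real.cos β)| := by
    intro y z
    have := aux (min |tri y| β) (min |tri z| β) (le_min (abs_nonneg _) hβ.le) (min_le_right _ _)
      (le_min (abs_nonneg _) hβ.le) (min_le_right _ _)
    rw [cos_min_tri hβ.le hβπ.le, cos_min_tri hβ.le hβπ.le, hKmin, hKmin, ← hKabs, ← hKabs] at this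
    exact this
  have auxsq : ∀ y z, (Real.cos (K (tri y)) - Real.cos (K (tri z))) ^ 2 ≤
      c ^ 4 * (max (Real.cos y) (Real.cos β) - max (Real.cos z) (Real.cos β)) ^ 2 := by
    intro y z
    have := pow_le_pow_left₀ (abs_nonneg _) (auxt y z) 2
    rw [sq_abs, mul_pow, sq_abs] at this
    calc _ ≤ _ := this
      _ = _ := by ring
  -- Where `cos y ≤ cos β`, the triangle wave has left the interval `(-β, β)`, and `K` is constant
  -- in a neighbourhood of such values because `b < β`.
  have sat : ∀ y, Real.cos y ≤ Real.cos β → β ≤ |tri y| := by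
    intro y hy
    by_contra hlt
    push Not at hlt
    have := Real.cos_lt_cos_of_nonneg_of_le_pi (abs_nonneg _) hβπ.le hlt
    rw [cos_abs_tri] at this
    linarith
  have satK : ∀ u, b ≤ |u| → K u = β ∨ K u = -β := by
    intro u hu
    rcases abs_choice u with h | h <;> rw [h] at hu
    · exact Or.inl (hKb _ hu)
    · right
      have := hKb _ hu
      rw [hodd] at this
      linarith
  have cosβ : -1 < Real.cos β := by
    have := Real.cos_lt_cos_of_nonneg_of_le_pi hβ.le le_rfl hβπ
    simpa using this
  -- The corners of the triangle wave sit at the heights `±π`, where `K` is locally constant.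
  have smooth : ContDiff ℝ 1 (fun y => K (tri y)) := by
    rw [contDiff_iff_contDiffAt]
    intro y
    rcases (Real.neg_one_le_cos y).lt_or_eq with h | h
    · exact hKC.contDiffAt.comp y (tri_smooth h).1
    · have hy : β ≤ |tri y| := sat y (by linarith)
      have hby : b < |tri y| := by linarith
      rcases lt_abs.1 hby with h' | h'
      · have : (fun y => K (tri y)) =ᶠ[𝓝 y] fun _ => β := by
          filter_upwards [continuous_tri.continuousAt.eventually (lt_mem_nhds h')] with z hz
          exact hKb _ hz.le
        exact contDiffAt_const.congr_of_eventuallyEq this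
      · have : (fun y => K (tri y)) =ᶠ[𝓝 y] fun _ => -β := by
          filter_upwards [continuous_tri.continuousAt.neg.eventually (lt_mem_nhds h')] with z hz
          have : K (-tri z) = β := hKb _ hz.le
          rw [hodd] at this
          linarith
        exact contDiffAt_const.congr_of_eventuallyEq this
  -- At the limits `|tri l| ≥ β > b`, so `K ∘ tri ∘ φ` is eventually constant, not merely convergent.
  have lim : ∀ (l : ℝ) (F : Filter ℝ), Tendsto φ F (𝓝 l) → Real.cos l = Real.cos β →
      (0 < Real.sin (l / 2) → ∀ᶠ x in F, K (tri (φ x)) = β) ∧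
      (Real.sin (l / 2) < 0 → ∀ᶠ x in F, K (tri (φ x)) = -β) := by
    intro l F hF hl
    have ht : Tendsto (fun x => tri (φ x)) F (𝓝 (tri l)) := (continuous_tri.tendsto l).comp hF
    have hbl : β ≤ |tri l| := sat l hl.le
    constructor
    · intro hpos
      have : 0 < tri l := by unfold tri; have := Real.arcsin_pos.2 hpos; linarith
      rw [abs_of_pos this] at hbl
      filter_upwards [ht.eventually (lt_mem_nhds (hbβ.trans_le hbl))] with x hx
      exact hKb _ hx.le
    · intro hneg
      have : tri l < 0 := by unfold tri; have := Real.arcsin_lt_zero.2 hneg; linarith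
      rw [abs_of_neg this] at hbl
      filter_upwards [ht.neg.eventually (lt_mem_nhds (hbβ.trans_le hbl))] with x hx
      have := hKb _ hx.le
      rw [hodd] at this
      linarith
  -- The sign `ε` orients the folded phase so that it increases from `-β` to `β`.
  have key : ∀ ε : ℝ, (ε = 1 ∨ ε = -1) →
      (∀ᶠ x in atBot, ε * K (tri (φ x)) = -β) → (∀ᶠ x in atTop, ε * K (tri (φ x)) = β) →
      ∃ ψ : ℝ → ℝ, ContDiff ℝ 1 ψ ∧ (∃ A, ∀ x, (x ≤ -A → ψ x = -β) ∧ (A ≤ x → ψ x = β)) ∧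
      (∀ x, (deriv ψ x) ^ 2 ≤ c ^ 4 * (deriv φ x) ^ 2) ∧
      (∀ x, Real.cos (φ x) ≤ Real.cos β → deriv ψ x = 0) ∧
      (∀ x, (Real.cos (ψ x) - Real.cos β) ^ 2 ≤
        c ^ 4 * (max (Real.cos (φ x)) (Real.cos β) - Real.cos β) ^ 2) ∧
      (∀ s t, (Real.cos (ψ s) - Real.cos (ψ t)) ^ 2 ≤
        c ^ 4 * (max (Real.cos (φ s)) (Real.cos β) - max (Real.cos (φ t)) (Real.cos β)) ^ 2) := by
    intro ε hε hbot htop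
    have hcos : ∀ u, Real.cos (ε * u) = Real.cos u := by
      rcases hε with rfl | rfl <;> simp
    have hsm : ContDiff ℝ 1 fun x => K (tri (φ x)) := smooth.comp hφ
    have hd0 : ∀ x, Real.cos (φ x) ≤ Real.cos β → deriv (fun x => ε * K (tri (φ x))) x = 0 := by
      intro x hx
      -- the composition attains an extreme value `±β` of `K` at such a point
      have h1 : deriv (fun x => K (tri (φ x))) x = 0 := by
        rcases satK _ (hbβ.le.trans (sat _ hx)) with h | h
        · exact IsLocalMax.deriv_eq_zero (Eventually.of_forall fun z => by
            simp only [h]; exact hKle _)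
        · exact IsLocalMin.deriv_eq_zero (Eventually.of_forall fun z => by
            simp only [h]; exact hKge _)
      rw [deriv_const_mul_field, h1, mul_zero]
    refine ⟨fun x => ε * K (tri (φ x)), contDiff_const.mul hsm, ?_, ?_, hd0, ?_, ?_⟩
    · obtain ⟨p, hp⟩ := eventually_atBot.1 hbot
      obtain ⟨q, hq⟩ := eventually_atTop.1 htop
      refine ⟨max (-p) q, fun x => ⟨fun hx => hp x ?_, fun hx => hq x ((le_max_right _ _).trans hx)⟩⟩
      have := le_max_left (-p) q
      linarith
    · intro x
      rcases le_or_gt (Real.cos (φ x)) (Real.cos β) with h | h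
      · rw [hd0 x h]
        simp only [ne_eq, OfNat.ofNat_ne_zero, not_false_eq_true, zero_pow]
        positivity
      · obtain ⟨t1, t2⟩ := tri_smooth (cosβ.trans h)
        have hh := ((hKC.differentiable one_ne_zero (tri (φ x))).hasDerivAt.comp (φ x)
          (t1.differentiableAt one_ne_zero).hasDerivAt).comp x
          (hφ.differentiable one_ne_zero x).hasDerivAt
        have h1 : deriv (fun x => K (tri (φ x))) x =
          deriv K (tri (φ x)) * deriv tri (φ x) * deriv φ x := hh.deriv
        rw [deriv_const_mul_field, h1]
        have hε2 : ε ^ 2 = 1 := by rcases hε with rfl | rfl <;> norm_num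
        have k1 : deriv K (tri (φ x)) ^ 2 ≤ c ^ 2 := by
          have := pow_le_pow_left₀ (abs_nonneg _) (hKd (tri (φ x))) 2
          rwa [sq_abs] at this
        have k2 : deriv tri (φ x) ^ 2 ≤ 1 := by
          have := pow_le_pow_left₀ (abs_nonneg _) t2 2
          rwa [sq_abs, one_pow] at this
        have k3 : c ^ 2 ≤ c ^ 4 := pow_le_pow_right₀ hc.le (by norm_num)
        calc _ = ε ^ 2 * (deriv K (tri (φ x)) ^ 2 * deriv tri (φ x) ^ 2 * deriv φ x ^ 2) := by ring
          _ ≤ 1 * (c ^ 4 * 1 * deriv φ x ^ 2) := by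
            rw [hε2]; gcongr; exact k1.trans k3
          _ = _ := by ring
    · intro x
      have := auxsq (φ x) β
      have hKβ : Real.cos (K (tri β)) = Real.cos β := by
        rcases satK (tri β) (hbβ.le.trans (sat β le_rfl)) with h | h <;> simp [h]
      rw [hKβ, max_self] at this
      simpa only [hcos] using this
    · intro s t
      simpa only [hcos] using auxsq (φ s) (φ t)
  have hB := lim lm _ hm clm
  have hT := lim lp _ hp clp
  rcases mul_neg_iff.1 hs with ⟨h1, h2⟩ | ⟨h1, h2⟩
  · refine key (-1) (Or.inr rfl) ?_ ?_
    · filter_upwards [hB.1 h1] with x hx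
      rw [hx]; ring
    · filter_upwards [hT.2 h2] with x hx
      rw [hx]; ring
  · refine key 1 (Or.inl rfl) ?_ ?_
    · filter_upwards [hB.2 h1] with x hx
      rw [hx]; ring
    · filter_upwards [hT.1 h2] with x hx
      rw [hx]; ring

/-! ### The energy as a functional of densities -/

/-- The functional assembling an energy from a local density `p` and a nonlocal density `q`, with the
weights `1/2` and `1/(4π)` of `energy`. -/
def J (p : ℝ → ℝ) (q : ℝ → ℝ → ℝ) : ℝ≥0∞ :=
  ENNReal.ofReal (1/2) * (∫⁻ x : ℝ, ENNReal.ofReal (p x)) +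
    ENNReal.ofReal (1/(4*π)) * (∫⁻ s : ℝ, ∫⁻ t : ℝ, ENNReal.ofReal (q s t))

lemma J_mono {p p' : ℝ → ℝ} {q q' : ℝ → ℝ → ℝ} (hp : ∀ x, p x ≤ p' x)
    (hq : ∀ s t, q s t ≤ q' s t) : J p q ≤ J p' q' := by
  unfold J
  gcongr with x s t
  · exact hp x
  · exact hq s t

lemma J_add {p p' : ℝ → ℝ} {q q' : ℝ → ℝ → ℝ} (hp : ∀ x, 0 ≤ p x) (hp' : ∀ x, 0 ≤ p' x)
    (hq : ∀ s t, 0 ≤ q s t) (hq' : ∀ s t, 0 ≤ q' s t) (mp : Measurable p)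
    (mq : Measurable (Function.uncurry q)) :
    J (fun x => p x + p' x) (fun s t => q s t + q' s t) = J p q + J p' q' := by
  unfold J
  have h1 : ∫⁻ x : ℝ, ENNReal.ofReal (p x + p' x) =
      (∫⁻ x : ℝ, ENNReal.ofReal (p x)) + ∫⁻ x : ℝ, ENNReal.ofReal (p' x) := by
    rw [← lintegral_add_left mp.ennreal_ofReal]
    exact lintegral_congr fun x => ENNReal.ofReal_add (hp x) (hp' x)
  have h2 : ∫⁻ s : ℝ, ∫⁻ t : ℝ, ENNReal.ofReal (q s t + q' s t) =
      (∫⁻ s : ℝ, ∫⁻ t : ℝ, ENNReal.ofReal (q s t)) +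
        ∫⁻ s : ℝ, ∫⁻ t : ℝ, ENNReal.ofReal (q' s t) := by
    rw [← lintegral_add_left (Measurable.lintegral_prod_right' (f := fun z : ℝ × ℝ =>
      ENNReal.ofReal (q z.1 z.2)) (ν := volume) mq.ennreal_ofReal)]
    refine lintegral_congr fun s => ?_
    rw [← lintegral_add_left]
    · exact lintegral_congr fun t => ENNReal.ofReal_add (hq s t) (hq' s t)
    · exact (mq.comp measurable_prodMk_left).ennreal_ofReal
  rw [h1, h2]
  ring

lemma J_smul {C : ℝ} (hC : 0 ≤ C) (p : ℝ → ℝ) (q : ℝ → ℝ → ℝ) :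
    J (fun x => C * p x) (fun s t => C * q s t) = ENNReal.ofReal C * J p q := by
  unfold J
  simp only [ENNReal.ofReal_mul hC]
  simp only [lintegral_const_mul' _ _ ENNReal.ofReal_ne_top]
  ring

/-- The energy with anisotropy `(cos φ - κ)²`. It agrees with `energy κ` for `κ < 1`; negative `κ`
occurs for phases shifted by `π`. -/
def en (κ : ℝ) (φ : ℝ → ℝ) : ℝ≥0∞ :=
  J (fun x => (deriv φ x) ^ 2 + (cos (φ x) - κ) ^ 2)
    (fun s t => (cos (φ s) - cos (φ t)) ^ 2 / (s - t) ^ 2)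

/-- For `h < 1` the identity `k = h` gives `2 W_h(θ) = (cos θ - h)²`. -/
lemma energy_eq {h : ℝ} (h1 : h < 1) (φ : ℝ → ℝ) : energy h φ = en h φ := by
  have hk : kparam h = h := min_eq_left h1.le
  unfold energy en J Wpot
  rw [hk]
  congr 3
  funext x
  congr 1
  ring

/-- A shift by `π` replaces `cos φ` by its negative, hence `κ` by `-κ`. -/
lemma en_sub_pi (κ : ℝ) (φ : ℝ → ℝ) : en (-κ) (fun x => φ x - π) = en κ φ := by
  unfold en
  congr 1
  · funext x
    rw [deriv_sub_const, cos_sub_pi]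
    ring
  · funext s t
    rw [cos_sub_pi, cos_sub_pi]
    ring

lemma en_comp_add (κ R : ℝ) (φ : ℝ → ℝ) : en κ (fun x => φ (x + R)) = en κ φ := by
  unfold en J
  congr 2
  · conv_rhs => rw [← lintegral_add_right_eq_self (μ := volume) _ R]
    refine lintegral_congr fun x => ?_
    beta_reduce
    rw [deriv_comp_add_const]
  · conv_rhs => rw [← lintegral_add_right_eq_self (μ := volume) _ R]
    refine lintegral_congr fun s => ?_
    conv_rhs => rw [← lintegral_add_right_eq_self (μ := volume) _ R]
    refine lintegral_congr fun t => ?_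
    beta_reduce
    rw [add_sub_add_right_eq_sub]

lemma measurable_p {φ : ℝ → ℝ} (hφ : ContDiff ℝ 1 φ) (κ : ℝ) :
    Measurable fun x => (deriv φ x) ^ 2 + (cos (φ x) - κ) ^ 2 := by
  have h1 := (hφ.continuous_deriv le_rfl).measurable
  have h2 := hφ.continuous.measurable
  fun_prop

lemma measurable_q {φ : ℝ → ℝ} (hφ : ContDiff ℝ 1 φ) :
    Measurable (Function.uncurry fun s t => (cos (φ s) - cos (φ t)) ^ 2 / (s - t) ^ 2) := by
  have h2 := hφ.continuous.measurable
  unfold Function.uncurry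
  fun_prop

/-! ### Phases that are constant outside a bounded interval -/

/-- The `C¹` phases equal to `-β` near `-∞` and to `β` near `+∞`. -/
def Comp (β : ℝ) : Set (ℝ → ℝ) :=
  {ψ | ContDiff ℝ 1 ψ ∧ ∃ A, ∀ x, (x ≤ -A → ψ x = -β) ∧ (A ≤ x → ψ x = β)}

lemma Comp.tendsto {β : ℝ} {ψ : ℝ → ℝ} (h : ψ ∈ Comp β) :
    Tendsto ψ atBot (𝓝 (-β)) ∧ Tendsto ψ atTop (𝓝 β) := by
  obtain ⟨-, A, hA⟩ := h
  constructor
  · refine tendsto_const_nhds.congr' ?_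
    filter_upwards [eventually_le_atBot (-A)] with x hx using ((hA x).1 hx).symm
  · refine tendsto_const_nhds.congr' ?_
    filter_upwards [eventually_ge_atTop A] with x hx using ((hA x).2 hx).symm

lemma alpha_facts {h : ℝ} (h0 : 0 ≤ h) (h1 : h < 1) :
    0 < alphaParam h ∧ alphaParam h ≤ π / 2 ∧ cos (alphaParam h) = h := by
  have hk : kparam h = h := min_eq_left h1.le
  unfold alphaParam
  rw [hk]
  exact ⟨arccos_pos.2 h1, arccos_le_pi_div_two.2 h0, cos_arccos (by linarith) h1.le⟩

lemma mem_AA {h : ℝ} (h1 : h < 1) {φ : ℝ → ℝ} {lm lp d : ℝ} (hφ : ContDiff ℝ 1 φ)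
    (hm : Tendsto φ atBot (𝓝 lm)) (hp : Tendsto φ atTop (𝓝 lp)) (hlm : lm ∈ limSet h)
    (hlp : lp ∈ limSet h) (hE : en h φ < ⊤) (hd : lp - lm = d * (2 * π)) : φ ∈ AA h d := by
  refine ⟨⟨hφ, ⟨lp, hlp, hp⟩, ⟨lm, hlm, hm⟩, by rwa [energy_eq h1]⟩, ?_⟩
  unfold deg
  rw [hm.limUnder_eq, hp.limUnder_eq, hd]
  have := pi_pos
  field_simp

lemma of_mem_AA {h : ℝ} {φ : ℝ → ℝ} {d : ℝ} (hφ : φ ∈ AA h d) :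
    ∃ lm lp, Tendsto φ atBot (𝓝 lm) ∧ Tendsto φ atTop (𝓝 lp) ∧ lm ∈ limSet h ∧ lp ∈ limSet h ∧
      lp - lm = d * (2 * π) := by
  obtain ⟨⟨-, ⟨lp, hlp, hp⟩, ⟨lm, hlm, hm⟩, -⟩, hd⟩ := hφ
  refine ⟨lm, lp, hm, hp, hlm, hlp, ?_⟩
  unfold deg at hd
  rw [hm.limUnder_eq, hp.limUnder_eq] at hd
  have := pi_pos
  rw [← hd]
  field_simp

/-- Finiteness of the energy may be assumed when a competitor is compared with the infimum. -/
lemma Einf_le {h d : ℝ} (h1 : h < 1) {φ : ℝ → ℝ} (H : en h φ < ⊤ → φ ∈ AA h d) :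
    Einf h d ≤ en h φ := by
  rcases eq_or_ne (en h φ) ⊤ with e | e
  · rw [e]; exact le_top
  · rw [← energy_eq h1]
    exact iInf₂_le φ (H e.lt_top)

lemma Einf_le_small {h : ℝ} (h1 : h < 1) {ψ : ℝ → ℝ} (hψ : ψ ∈ Comp (alphaParam h)) :
    Einf h (alphaParam h / π) ≤ en h ψ := by
  refine Einf_le h1 fun hE => ?_
  obtain ⟨tm, tp⟩ := Comp.tendsto hψ
  refine mem_AA h1 hψ.1 tm tp ⟨0, Or.inr (by simp)⟩ ⟨0, Or.inl (by simp)⟩ hE ?_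
  have := pi_pos
  field_simp
  ring

/-- The shift by `π` turns a phase from `-(π - α)` to `π - α` into one from `α` to `2π - α`. -/
lemma Einf_le_large {h : ℝ} (h1 : h < 1) {ψ : ℝ → ℝ} (hψ : ψ ∈ Comp (π - alphaParam h)) :
    Einf h (1 - alphaParam h / π) ≤ en (-h) ψ := by
  have e : en (-h) ψ = en h (fun x => ψ x + π) := by
    rw [← en_sub_pi h]; simp
  rw [e]
  refine Einf_le h1 fun hE => ?_
  obtain ⟨tm, tp⟩ := Comp.tendsto hψ
  refine mem_AA h1 (hψ.1.add contDiff_const) (tm.add_const π) (tp.add_const π)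
    ⟨0, Or.inl (by simp)⟩ ⟨1, Or.inr (by push_cast; ring)⟩ hE ?_
  have := pi_pos
  field_simp
  ring

/-- A phase that runs from `2πn - β` to `2πn + β` can be made constant outside a bounded interval at the
cost of a factor `c⁴` in energy. -/
lemma exists_fold_en (β c : ℝ) (hβ : 0 < β) (hβπ : β < π) (hc : 1 < c)
    (φ : ℝ → ℝ) (hφ : ContDiff ℝ 1 φ) (n : ℤ)
    (hm : Tendsto φ atBot (𝓝 (2 * π * n - β))) (hp : Tendsto φ atTop (𝓝 (2 * π * n + β))) :
    ∃ ψ ∈ Comp β, en (cos β) ψ ≤ ENNReal.ofReal (c ^ 4) * en (cos β) φ := by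
  have e1 : 2 * π * n - β = n * (2 * π) - β := by ring
  have e2 : 2 * π * n + β = β + n * (2 * π) := by ring
  have hcβ : cos β < 1 := by
    have := cos_lt_cos_of_nonneg_of_le_pi le_rfl hβπ.le hβ
    simpa using this
  obtain ⟨ψ, hC, hA, d1, -, d3, d4⟩ := exists_fold β c hβ hβπ hc φ hφ _ _ hm hp
    (by rw [e1, cos_int_mul_two_pi_sub]) (by rw [e2, cos_add_int_mul_two_pi]) (by
      have h1 := cos_sub ((2 * π * n - β) / 2) ((2 * π * n + β) / 2)
      have h2 := cos_add ((2 * π * n - β) / 2) ((2 * π * n + β) / 2)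
      have e3 : (2 * π * n - β) / 2 - (2 * π * n + β) / 2 = -β := by ring
      have e4 : (2 * π * n - β) / 2 + (2 * π * n + β) / 2 = n * (2 * π) := by ring
      rw [e3, cos_neg] at h1
      rw [e4, cos_int_mul_two_pi] at h2
      linarith)
  refine ⟨ψ, ⟨hC, hA⟩, ?_⟩
  have hc4 : 0 ≤ c ^ 4 := by positivity
  unfold en
  rw [← J_smul hc4]
  refine J_mono (fun x => ?_) fun s t => ?_
  · have : (max (cos (φ x)) (cos β) - cos β) ^ 2 ≤ (cos (φ x) - cos β) ^ 2 := by
      rcases le_total (cos (φ x)) (cos β) with h | h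
      · rw [max_eq_right h]; nlinarith
      · rw [max_eq_left h]
    have := mul_le_mul_of_nonneg_left this hc4
    linarith [d1 x, d3 x]
  · rw [← mul_div_assoc]
    gcongr
    refine (d4 s t).trans ?_
    gcongr ?_ * ?_
    have := abs_max_sub_max_le_abs (cos (φ s)) (cos (φ t)) (cos β)
    exact sq_le_sq.2 this

lemma int_eq_of_lt {m : ℤ} {k : ℤ} (h1 : ((k - 1 : ℤ) : ℝ) * π < m * π)
    (h2 : (m : ℝ) * π < ((k + 1 : ℤ) : ℝ) * π) : m = k := by
  have a1 := lt_of_mul_lt_mul_right h1 pi_pos.le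
  have a2 := lt_of_mul_lt_mul_right h2 pi_pos.le
  have b1 : k - 1 < m := by exact_mod_cast a1
  have b2 : m < k + 1 := by exact_mod_cast a2
  omega

/-- Phases of degree `α/π` may be taken constant outside a bounded interval. Such a phase has limits
`2πn - α` and `2πn + α`; only for `α = π/2` can the limits be `2πn + α` and `2π(n + 1) - α` instead. -/
lemma cutoff_small {h : ℝ} (h0 : 0 ≤ h) (h1 : h < 1) {φ : ℝ → ℝ}
    (hφ : φ ∈ AA h (alphaParam h / π)) {c : ℝ} (hc : 1 < c) :
    ∃ ψ ∈ Comp (alphaParam h), en h ψ ≤ ENNReal.ofReal (c ^ 4) * energy h φ := by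
  obtain ⟨ha0, ha2, hcos⟩ := alpha_facts h0 h1
  have hpi := pi_pos
  obtain ⟨lm, lp, hm, hp, hlm, hlp, hd⟩ := of_mem_AA hφ
  have hC := hφ.1.1
  rw [energy_eq h1]
  have hd' : lp - lm = 2 * alphaParam h := by rw [hd]; field_simp
  obtain ⟨n, hn⟩ := hlm
  obtain ⟨m, hm'⟩ := hlp
  generalize alphaParam h = α at *
  rcases hn with rfl | rfl <;> rcases hm' with rfl | rfl
  · have := int_eq_of_lt (m := m - n) (k := 1) (by push_cast; nlinarith) (by push_cast; nlinarith)
    have : m = n + 1 := by omega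
    subst this; push_cast at hd'; nlinarith
  · have := int_eq_of_lt (m := m - n) (k := 1) (by push_cast; nlinarith) (by push_cast; nlinarith)
    have : m = n + 1 := by omega
    subst this
    push_cast at hd' hp
    have hα : α = π / 2 := by linarith
    have hz : h = 0 := by rw [← hcos, hα, cos_pi_div_two]
    -- here `h = 0`, and the shift by `π` preserves the energy
    obtain ⟨ψ, h3, h4⟩ := exists_fold_en α c ha0 (by linarith) hc (fun x => φ x - π)
      (hC.sub contDiff_const) n
      ((hm.sub_const π).trans_eq (by congr 1; rw [hα]; ring))
      ((hp.sub_const π).trans_eq (by congr 1; rw [hα]; ring))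
    refine ⟨ψ, h3, ?_⟩
    have h5 := en_sub_pi h φ
    rw [hcos] at h4
    rw [hz, neg_zero] at h5
    rw [hz] at h4 ⊢
    rwa [h5] at h4
  · have := int_eq_of_lt (m := m - n) (k := 0) (by push_cast; nlinarith) (by push_cast; nlinarith)
    have : m = n := by omega
    subst this
    have := exists_fold_en α c ha0 (by linarith) hc φ hC m hm hp
    rwa [hcos] at this
  · have := int_eq_of_lt (m := m - n) (k := 1) (by push_cast; nlinarith) (by push_cast; nlinarith)
    have : m = n + 1 := by omega
    subst this; push_cast at hd'; nlinarith

/-- Phases of degree `1 - α/π`, shifted by `π`, may be taken constant outside a bounded interval. Such a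
phase has limits `2πn + α` and `2π(n + 1) - α`, or `2πn - α` and `2πn + α` when `α = π/2`. -/
lemma cutoff_large {h : ℝ} (h0 : 0 ≤ h) (h1 : h < 1) {φ : ℝ → ℝ}
    (hφ : φ ∈ AA h (1 - alphaParam h / π)) {c : ℝ} (hc : 1 < c) :
    ∃ ψ ∈ Comp (π - alphaParam h), en (-h) ψ ≤ ENNReal.ofReal (c ^ 4) * energy h φ := by
  obtain ⟨ha0, ha2, hcos⟩ := alpha_facts h0 h1
  have hpi := pi_pos
  obtain ⟨lm, lp, hm, hp, hlm, hlp, hd⟩ := of_mem_AA hφ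
  have hC := hφ.1.1
  rw [energy_eq h1]
  have hd' : lp - lm = 2 * π - 2 * alphaParam h := by rw [hd]; field_simp
  have hcos' : cos (π - alphaParam h) = -h := by rw [cos_pi_sub, hcos]
  obtain ⟨n, hn⟩ := hlm
  obtain ⟨m, hm'⟩ := hlp
  generalize alphaParam h = α at *
  rcases hn with rfl | rfl <;> rcases hm' with rfl | rfl
  · have := int_eq_of_lt (m := m - n) (k := 0) (by push_cast; nlinarith) (by push_cast; nlinarith)
    have : m = n := by omega
    subst this; nlinarith
  · have := int_eq_of_lt (m := m - n) (k := 1) (by push_cast; nlinarith) (by push_cast; nlinarith)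
    have : m = n + 1 := by omega
    subst this
    push_cast at hd' hp
    obtain ⟨ψ, h3, h4⟩ := exists_fold_en (π - α) c (by linarith) (by linarith) hc
      (fun x => φ x - π) (hC.sub contDiff_const) n
      ((hm.sub_const π).trans_eq (by congr 1; ring))
      ((hp.sub_const π).trans_eq (by congr 1; ring))
    refine ⟨ψ, h3, ?_⟩
    rwa [hcos', en_sub_pi h φ] at h4
  · have := int_eq_of_lt (m := m - n) (k := 0) (by push_cast; nlinarith) (by push_cast; nlinarith)
    have : m = n := by omega
    subst this
    have hα : α = π / 2 := by linarith
    have hz : h = 0 := by rw [← hcos, hα, cos_pi_div_two]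
    have := exists_fold_en (π - α) c (by linarith) (by linarith) hc φ hC m
      (hm.trans_eq (by congr 1; rw [hα]; ring)) (hp.trans_eq (by congr 1; rw [hα]; ring))
    rw [hcos', hz, neg_zero] at this
    rwa [hz, neg_zero]
  · have := int_eq_of_lt (m := m - n) (k := 0) (by push_cast; nlinarith) (by push_cast; nlinarith)
    have : m = n := by omega
    subst this; nlinarith

/-! ### The interaction term and the lower bound -/

/-- The density of the stray-field interaction between the regions `cos φ > h` and `cos φ < h`: with
`u = cos φ - h` it is `2 (u⁺(s) u⁻(t) + u⁻(s) u⁺(t)) / (s - t)²`. -/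
def gapDensity (h : ℝ) (φ : ℝ → ℝ) (s t : ℝ) : ℝ :=
  2 * (max (cos (φ s) - h) 0 * max (h - cos (φ t)) 0 +
    max (h - cos (φ s)) 0 * max (cos (φ t) - h) 0) / (s - t) ^ 2

lemma gapDensity_nonneg (h : ℝ) (φ : ℝ → ℝ) (s t : ℝ) : 0 ≤ gapDensity h φ s t := by
  unfold gapDensity
  have := fun x : ℝ => le_max_right x 0
  have h1 := mul_nonneg (this (cos (φ s) - h)) (this (h - cos (φ t)))
  have h2 := mul_nonneg (this (h - cos (φ s))) (this (cos (φ t) - h))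
  positivity

/-- With `u = a - h` and `v = b - h`, this reads
`(u⁺ - v⁺)² + (u⁻ - v⁻)² + 2 (u⁺ v⁻ + u⁻ v⁺) = (u - v)²`. -/
lemma split_identity (a b h : ℝ) :
    (max a h - max b h) ^ 2 + (max (-a) (-h) - max (-b) (-h)) ^ 2 +
      2 * (max (a - h) 0 * max (h - b) 0 + max (h - a) 0 * max (b - h) 0) = (a - b) ^ 2 := by
  rcases le_total a h with ha | ha <;> rcases le_total b h with hb | hb
  all_goals
    simp only [ha, hb, max_eq_left, max_eq_right, neg_le_neg_iff, sub_nonneg, sub_nonpos]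
    ring

/-- An iterated integral over the plane can vanish only if the integrand has a zero in every
nonempty open box. -/
lemma exists_zero_of_lintegral_eq_zero {F : ℝ → ℝ → ℝ≥0∞} (hF : Measurable (Function.uncurry F))
    (H : ∫⁻ s : ℝ, ∫⁻ t : ℝ, F s t = 0) {U V : Set ℝ} (hU : IsOpen U) (hV : IsOpen V)
    (nU : U.Nonempty) (nV : V.Nonempty) : ∃ s ∈ U, ∃ t ∈ V, F s t = 0 := by
  have m1 : Measurable fun s : ℝ => ∫⁻ t : ℝ, F s t := hF.lintegral_prod_right'
  have a1 := (lintegral_eq_zero_iff m1).1 H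
  obtain ⟨s, hsU, hs⟩ := (Measure.dense_of_ae a1).exists_mem_open hU nU
  have m2 : Measurable fun t : ℝ => F s t := hF.comp measurable_prodMk_left
  have a2 := (lintegral_eq_zero_iff m2).1 hsU
  obtain ⟨t, htV, ht⟩ := (Measure.dense_of_ae a2).exists_mem_open hV nV
  exact ⟨s, hs, t, ht, htV⟩

/-- The interaction density is nonnegative, and positive on the nonempty open box
`{cos φ > h} × {cos φ < h}`. -/
lemma gap_pos {h : ℝ} {φ : ℝ → ℝ} (hφ : Continuous φ) {x y : ℝ} (hx : h < cos (φ x))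
    (hy : cos (φ y) < h) : 0 < J (fun _ => 0) (gapDensity h φ) := by
  have hpi := pi_pos
  have hmeas : Measurable (Function.uncurry fun s t => ENNReal.ofReal (gapDensity h φ s t)) := by
    have h2 := hφ.measurable
    unfold Function.uncurry gapDensity
    fun_prop
  have o1 : IsOpen {s | h < cos (φ s)} := isOpen_lt continuous_const (by fun_prop)
  have o2 : IsOpen {s | cos (φ s) < h} := isOpen_lt (by fun_prop) continuous_const
  have hne : ∫⁻ s : ℝ, ∫⁻ t : ℝ, ENNReal.ofReal (gapDensity h φ s t) ≠ 0 := by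
    intro h0
    obtain ⟨s, hs, t, ht, hz⟩ := exists_zero_of_lintegral_eq_zero hmeas h0 o1 o2 ⟨x, hx⟩ ⟨y, hy⟩
    change h < cos (φ s) at hs
    change cos (φ t) < h at ht
    rw [ENNReal.ofReal_eq_zero] at hz
    have hst : s ≠ t := by rintro rfl; linarith
    have hst2 : 0 < (s - t) ^ 2 := by
      have := sub_ne_zero.2 hst
      positivity
    have : 0 < gapDensity h φ s t := by
      unfold gapDensity
      rw [max_eq_left (by linarith), max_eq_left (by linarith),
        max_eq_right (by linarith : h - cos (φ s) ≤ 0)]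
      have := mul_pos (sub_pos.2 hs) (sub_pos.2 ht)
      apply div_pos _ hst2
      linarith
    linarith
  have hc : ENNReal.ofReal (1 / (4 * π)) ≠ 0 := by
    rw [Ne, ENNReal.ofReal_eq_zero, not_le]
    positivity
  unfold J
  rw [pos_iff_ne_zero]
  exact fun h0 => mul_ne_zero hc hne (add_eq_zero.1 h0).2

/-- Folding `φ` at the angle `α` keeps the part with `cos φ > h`, and folding `φ - π` at the angle `π - α`
keeps the part with `cos φ < h`. The two local energies add up to at most that of `φ`, and the nonlocal
ones leave the interaction term as a remainder. -/
lemma lower_bound {h : ℝ} (h0 : 0 ≤ h) (h1 : h < 1) {φ : ℝ → ℝ} (hφ : φ ∈ AA h 1) {c : ℝ}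
    (hc : 1 < c) :
    Einf h (alphaParam h / π) + Einf h (1 - alphaParam h / π) + J (fun _ => 0) (gapDensity h φ) ≤
      ENNReal.ofReal (c ^ 4) * energy h φ := by
  obtain ⟨ha0, ha2, hcos⟩ := alpha_facts h0 h1
  have hpi := pi_pos
  obtain ⟨lm, lp, hm, hp, hlm, hlp, hd⟩ := of_mem_AA hφ
  have hC := hφ.1.1
  have hcos' : cos (π - alphaParam h) = -h := by rw [cos_pi_sub, hcos]
  have hlp' : lp = lm + 2 * π := by linarith
  have hclm : cos lm = h := by
    obtain ⟨n, hn | hn⟩ := hlm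
    · rw [hn, show 2 * π * n + alphaParam h = alphaParam h + n * (2 * π) by ring,
        cos_add_int_mul_two_pi, hcos]
    · rw [hn, show 2 * π * n - alphaParam h = n * (2 * π) - alphaParam h by ring,
        cos_int_mul_two_pi_sub, hcos]
  have hclp : cos lp = h := by rw [hlp', cos_add_two_pi, hclm]
  -- the limits differ by `2π`, half a period of the triangle wave
  have sgn : ∀ l : ℝ, cos l ≠ 1 → sin (l / 2) * sin ((l + 2 * π) / 2) < 0 := by
    intro l hl
    rw [show (l + 2 * π) / 2 = l / 2 + π by ring, sin_add_pi]
    have : sin (l / 2) ≠ 0 := by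
      intro h
      apply hl
      rw [show l = 2 * (l / 2) by ring, cos_two_mul, cos_sq', h]
      norm_num
    have : 0 < sin (l / 2) ^ 2 := by positivity
    nlinarith
  obtain ⟨ψ, C1, A1, d1, d2, d3, d4⟩ := exists_fold (alphaParam h) c ha0 (by linarith) hc φ hC
    lm lp hm hp (by rw [hclm, hcos]) (by rw [hclp, hcos]) (by
      rw [hlp']; exact sgn _ (by rw [hclm]; exact h1.ne))
  obtain ⟨χ, C2, A2, e1, e2, e3, e4⟩ := exists_fold (π - alphaParam h) c (by linarith)
    (by linarith) hc (fun x => φ x - π) (hC.sub contDiff_const) (lm - π) (lp - π)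
    (hm.sub_const π) (hp.sub_const π)
    (by rw [hcos', cos_sub_pi, hclm]) (by rw [hcos', cos_sub_pi, hclp]) (by
      rw [hlp', show lm + 2 * π - π = lm - π + 2 * π by ring]
      exact sgn _ (by rw [cos_sub_pi, hclm]; linarith))
  simp only [hcos, hcos', cos_sub_pi, deriv_sub_const] at d2 d3 d4 e1 e2 e3 e4
  have hc4 : 1 ≤ c ^ 4 := one_le_pow₀ hc.le
  calc _ ≤ en h ψ + en (-h) χ + J (fun _ => 0) (gapDensity h φ) := by
        gcongr
        · exact Einf_le_small h1 ⟨C1, A1⟩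
        · exact Einf_le_large h1 ⟨C2, A2⟩
    _ ≤ ENNReal.ofReal (c ^ 4) * en h φ := ?_
    _ = _ := by rw [energy_eq h1]
  unfold en
  rw [← J_smul (by positivity), ← J_add, ← J_add]
  · refine J_mono (fun x => ?_) fun s t => ?_
    -- at every point at least one of the two folded phases is stationary
    · have hd : deriv ψ x ^ 2 + deriv χ x ^ 2 ≤ c ^ 4 * deriv φ x ^ 2 := by
        rcases le_total (cos (φ x)) h with hx | hx
        · rw [d2 x hx]; have := e1 x; linarith
        · rw [e2 x (by linarith)]; have := d1 x; linarith
      have hn : (cos (ψ x) - h) ^ 2 + (cos (χ x) - -h) ^ 2 ≤ c ^ 4 * (cos (φ x) - h) ^ 2 := by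
        have h3 := d3 x
        have h4 := e3 x
        rcases le_total (cos (φ x)) h with hx | hx
        · rw [max_eq_right hx] at h3
          rw [max_eq_left (by linarith)] at h4
          nlinarith
        · rw [max_eq_left hx] at h3
          rw [max_eq_right (by linarith)] at h4
          nlinarith
      linarith
    · unfold gapDensity
      rw [← add_div, ← add_div, ← mul_div_assoc]
      gcongr
      have h3 := d4 s t
      have h4 := e4 s t
      have h5 := split_identity (cos (φ s)) (cos (φ t)) h
      have h6 : 0 ≤ 2 * (max (cos (φ s) - h) 0 * max (h - cos (φ t)) 0 +
        max (h - cos (φ s)) 0 * max (cos (φ t) - h) 0) := by positivity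
      rw [← h5]
      nlinarith
  all_goals first
    | exact measurable_p C1 _
    | exact measurable_q C1
    | exact (measurable_p C1 _).add (measurable_p C2 _)
    | exact (measurable_q C1).add (measurable_q C2)
    | exact gapDensity_nonneg _ _
    | (intros; positivity)

lemma le_of_forall_const {X E : ℝ≥0∞} (H : ∀ c : ℝ, 1 < c → X ≤ ENNReal.ofReal (c ^ 4) * E)
    : X ≤ E := by
  rcases eq_or_ne E ⊤ with rfl | hE
  · exact le_top
  have h1 : Tendsto (fun c : ℝ => ENNReal.ofReal (c ^ 4)) (𝓝[>] 1) (𝓝 (ENNReal.ofReal (1 ^ 4))) :=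
    ((ENNReal.continuous_ofReal.comp (continuous_pow 4)).tendsto (1:ℝ)).mono_left
      nhdsWithin_le_nhds
  have h2 := ENNReal.Tendsto.mul_const h1 (b := E) (Or.inr hE)
  rw [one_pow, ENNReal.ofReal_one, one_mul] at h2
  exact ge_of_tendsto h2 (eventually_mem_nhdsWithin.mono fun c hc => H c hc)

/-- A phase of degree one passes through an angle with cosine `1` and one with cosine `-1`. -/
lemma gap_pos_of_mem {h : ℝ} (h0 : 0 ≤ h) (h1 : h < 1) {φ : ℝ → ℝ} (hφ : φ ∈ AA h 1) :
    0 < J (fun _ => 0) (gapDensity h φ) := by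
  obtain ⟨ha0, ha2, hcos⟩ := alpha_facts h0 h1
  have hpi := pi_pos
  obtain ⟨lm, lp, hm, hp, hlm, hlp, hd⟩ := of_mem_AA hφ
  have hC := hφ.1.1.continuous
  have ivt : ∀ y, lm < y → y < lp → ∃ x, φ x = y := by
    intro y h2 h3
    obtain ⟨a, ha⟩ := (hm.eventually (gt_mem_nhds h2)).exists
    obtain ⟨b, hb⟩ := (hp.eventually (lt_mem_nhds h3)).exists
    exact mem_range_of_exists_le_of_exists_ge hC ⟨a, ha.le⟩ ⟨b, hb.le⟩
  obtain ⟨n, hn⟩ := hlm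
  have hy : ∃ y, φ y = n * (2 * π) + π := by
    apply ivt <;> rcases hn with hn | hn <;> nlinarith
  have hx : ∃ x, cos (φ x) = 1 := by
    rcases hn with hn | hn
    · obtain ⟨x, hx⟩ := ivt (((n + 1 : ℤ) : ℝ) * (2 * π)) (by push_cast; nlinarith)
        (by push_cast; nlinarith)
      exact ⟨x, by rw [hx, cos_int_mul_two_pi]⟩
    · obtain ⟨x, hx⟩ := ivt ((n : ℝ) * (2 * π)) (by nlinarith) (by nlinarith)
      exact ⟨x, by rw [hx, cos_int_mul_two_pi]⟩
  obtain ⟨x, hx⟩ := hx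
  obtain ⟨y, hy⟩ := hy
  refine gap_pos hC (x := x) (y := y) (by rw [hx]; exact h1) ?_
  rw [hy, cos_int_mul_two_pi_add_pi]
  linarith

/-! ### Gluing distant transitions -/

lemma lintegral_box {k : ℝ} (hk : 0 ≤ k) {S T : Set ℝ} (hS : MeasurableSet S)
    (hT : MeasurableSet T) :
    ∫⁻ s : ℝ, ∫⁻ t : ℝ, ENNReal.ofReal (k * (S.indicator 1 s * T.indicator 1 t)) =
      ENNReal.ofReal k * (volume S * volume T) := by
  have ind : ∀ (U : Set ℝ) (x : ℝ), ENNReal.ofReal (U.indicator (1 : ℝ → ℝ) x) =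
      U.indicator (1 : ℝ → ℝ≥0∞) x := by
    intro U x
    by_cases hx : x ∈ U <;> simp [hx]
  have e : ∀ s t : ℝ, ENNReal.ofReal (k * (S.indicator 1 s * T.indicator 1 t)) =
      ENNReal.ofReal k * (S.indicator 1 s * T.indicator 1 t) := by
    intro s t
    rw [ENNReal.ofReal_mul hk, ENNReal.ofReal_mul (Set.indicator_nonneg (by simp) _), ind, ind]
  have mS : Measurable (S.indicator (1 : ℝ → ℝ≥0∞)) := measurable_one.indicator hS
  have mT : Measurable (T.indicator (1 : ℝ → ℝ≥0∞)) := measurable_one.indicator hT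
  simp only [e]
  simp only [lintegral_const_mul' _ _ ENNReal.ofReal_ne_top]
  congr 1
  simp only [lintegral_const_mul _ mT, lintegral_mul_const _ mS]
  rw [lintegral_indicator_one hS, lintegral_indicator_one hT]

/-- Two phases that are constant outside bounded intervals, placed at distance `2N` from each other, form
a phase of degree one. Its energy exceeds the sum of the two energies only by the mutual interaction,
which is `O(N⁻²)`. -/
lemma glue {h : ℝ} (h1 : h < 1) {ψ χ : ℝ → ℝ} (hψ : ψ ∈ Comp (alphaParam h))
    (hχ : χ ∈ Comp (π - alphaParam h)) (hcos : cos (alphaParam h) = h) :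
    Einf h 1 ≤ en h ψ + en (-h) χ := by
  have hpi := pi_pos
  obtain ⟨C1, A1, hA1⟩ := id hψ
  obtain ⟨C2, A2, hA2⟩ := id hχ
  obtain ⟨A, hA⟩ : ∃ A, A = max 0 (max A1 A2) := ⟨_, rfl⟩
  have a0 : 0 ≤ A := hA ▸ le_max_left _ _
  have a1 : A1 ≤ A := hA ▸ (le_max_left _ _).trans (le_max_right _ _)
  have a2 : A2 ≤ A := hA ▸ (le_max_right _ _).trans (le_max_right _ _)
  generalize hα : alphaParam h = α at *
  -- The transitions of `f` and `g` take place in the intervals `I` and `I'` of length `2A` below, at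
  -- mutual distance `2N`; `m1` and `m2` are the contributions of `f` and `g` to `cos φ - h`.
  have step : ∀ N : ℝ, 1 ≤ N → Einf h 1 ≤ en h ψ + en (-h) χ + ENNReal.ofReal (1/(4*π)) *
      (ENNReal.ofReal (2 / N ^ 2) * (ENNReal.ofReal (2 * A) * ENNReal.ofReal (2 * A)) +
        ENNReal.ofReal (2 / N ^ 2) * (ENNReal.ofReal (2 * A) * ENNReal.ofReal (2 * A))) := by
    intro N hN
    let R := A + N
    let f : ℝ → ℝ := fun x => ψ (x + R)
    let g : ℝ → ℝ := fun x => χ (x + -R)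
    let φ : ℝ → ℝ := fun x => f x + g x + (π - α)
    have Cf : ContDiff ℝ 1 f := C1.comp (contDiff_id.add contDiff_const)
    have Cg : ContDiff ℝ 1 g := C2.comp (contDiff_id.add contDiff_const)
    have Cφ : ContDiff ℝ 1 φ := (Cf.add Cg).add contDiff_const
    have fr : ∀ x, -N ≤ x → f x = α := fun x hx => (hA1 _).2 (by simp only [R]; linarith)
    have fl : ∀ x, x ≤ -2 * A - N → f x = -α := fun x hx => (hA1 _).1 (by simp only [R]; linarith)
    have gl : ∀ x, x ≤ N → g x = -(π - α) := fun x hx => (hA2 _).1 (by simp only [R]; linarith)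
    have gr : ∀ x, 2 * A + N ≤ x → g x = π - α := fun x hx => (hA2 _).2 (by simp only [R]; linarith)
    let I : Set ℝ := Set.Icc (-2 * A - N) (-N)
    let I' : Set ℝ := Set.Icc N (2 * A + N)
    let m1 : ℝ → ℝ := fun x => cos (f x) - h
    let m2 : ℝ → ℝ := fun x => -(cos (g x) + h)
    have cosβ : cos (π - α) = -h := by rw [cos_pi_sub, hcos]
    have m1z : ∀ x, x ∉ I → m1 x = 0 := by
      intro x hx
      simp only [m1]
      rw [Set.mem_Icc, not_and_or, not_le, not_le] at hx
      rcases hx with hx | hx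
      · rw [fl x hx.le, cos_neg, hcos, sub_self]
      · rw [fr x hx.le, hcos, sub_self]
    have m2z : ∀ x, x ∉ I' → m2 x = 0 := by
      intro x hx
      simp only [m2]
      rw [Set.mem_Icc, not_and_or, not_le, not_le] at hx
      rcases hx with hx | hx
      · rw [gl x hx.le, cos_neg, cosβ]; ring
      · rw [gr x hx.le, cosβ]; ring
    have hm : ∀ x, cos (φ x) - h = m1 x + m2 x := by
      intro x
      rcases le_total x 0 with hx | hx
      · have : φ x = f x := by simp only [φ]; rw [gl x (by linarith)]; ring
        rw [this, m2z x (fun hx' => by have := hx'.1; linarith)]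
        simp [m1]
      · have : φ x = g x + π := by simp only [φ]; rw [fr x (by linarith)]; ring
        rw [this, m1z x (fun hx' => by have := hx'.2; linarith), cos_add_pi]
        simp only [m2]; ring
    -- disjoint supports make the anisotropy additive, and leave only `m1 s * m2 t` and `m2 s * m1 t`
    -- as cross terms in the nonlocal energy
    have hprod : ∀ x, m1 x * m2 x = 0 := by
      intro x
      rcases le_total x 0 with hx | hx
      · rw [m2z x (fun hx' => by have := hx'.1; linarith), mul_zero]
      · rw [m1z x (fun hx' => by have := hx'.2; linarith), zero_mul]
    have hder : ∀ x, deriv φ x ^ 2 = deriv f x ^ 2 + deriv g x ^ 2 := by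
      intro x
      have e : deriv φ x = deriv f x + deriv g x := by
        simp only [φ]
        rw [deriv_add_const, deriv_fun_add (Cf.differentiable one_ne_zero x)
          (Cg.differentiable one_ne_zero x)]
      rcases le_total x 0 with hx | hx
      · have : deriv g x = 0 := by
          have : g =ᶠ[𝓝 x] fun _ => -(π - α) := by
            filter_upwards [gt_mem_nhds (show x < N by linarith)] with z hz using gl z hz.le
          rw [this.deriv_eq, deriv_const]
        rw [e, this]; ring
      · have : deriv f x = 0 := by
          have : f =ᶠ[𝓝 x] fun _ => α := by
            filter_upwards [lt_mem_nhds (show -N < x by linarith)] with z hz using fr z hz.le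
          rw [this.deriv_eq, deriv_const]
        rw [e, this]; ring
    have bound : ∀ s t, -(m1 s * m2 t) ≤ 4 * (I.indicator 1 s * I'.indicator 1 t) := by
      intro s t
      by_cases hs : s ∈ I
      · by_cases ht : t ∈ I'
        · simp only [hs, ht, Set.indicator_of_mem, Pi.one_apply]
          have b1 : |m1 s| ≤ 2 := by
            have := neg_one_le_cos (f s); have := cos_le_one (f s)
            have := neg_one_le_cos α; have := cos_le_one α
            simp only [m1]; rw [abs_le]; constructor <;> linarith
          have b2 : |m2 t| ≤ 2 := by
            have := neg_one_le_cos (g t); have := cos_le_one (g t)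
            have := neg_one_le_cos α; have := cos_le_one α
            simp only [m2]; rw [abs_le]; constructor <;> linarith
          calc -(m1 s * m2 t) ≤ |m1 s * m2 t| := neg_le_abs _
            _ = |m1 s| * |m2 t| := abs_mul _ _
            _ ≤ 2 * 2 := by gcongr
            _ = _ := by norm_num
        · simp [m2z t ht, ht]
      · simp [m1z s hs, hs]
    have far : ∀ s t, I.indicator (1 : ℝ → ℝ) s * I'.indicator 1 t / (s - t) ^ 2 ≤
        1 / (4 * N ^ 2) * (I.indicator 1 s * I'.indicator 1 t) := by
      intro s t
      by_cases hs : s ∈ I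
      · by_cases ht : t ∈ I'
        · simp only [hs, ht, Set.indicator_of_mem, Pi.one_apply, mul_one]
          have := hs.2
          have := ht.1
          apply one_div_le_one_div_of_le (by positivity)
          nlinarith
        · simp [ht]
      · simp [hs]
    have i0 : ∀ (U : Set ℝ) x, 0 ≤ U.indicator (1 : ℝ → ℝ) x := fun U x =>
      Set.indicator_nonneg (by simp) _
    let k : ℝ := 2 / N ^ 2
    have hk : 0 ≤ k := by positivity
    have mI : MeasurableSet I := measurableSet_Icc
    have mI' : MeasurableSet I' := measurableSet_Icc
    let q1 : ℝ → ℝ → ℝ := fun s t => k * (I.indicator 1 s * I'.indicator 1 t)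
    let q2 : ℝ → ℝ → ℝ := fun s t => k * (I'.indicator 1 s * I.indicator 1 t)
    have q1nn : ∀ s t, 0 ≤ q1 s t := fun s t => mul_nonneg hk (mul_nonneg (i0 _ _) (i0 _ _))
    have q2nn : ∀ s t, 0 ≤ q2 s t := fun s t => mul_nonneg hk (mul_nonneg (i0 _ _) (i0 _ _))
    have mq1 : Measurable (Function.uncurry q1) := by
      have x1 : Measurable (I.indicator (1 : ℝ → ℝ)) := measurable_one.indicator mI
      have x2 : Measurable (I'.indicator (1 : ℝ → ℝ)) := measurable_one.indicator mI'
      exact ((x1.comp measurable_fst).mul (x2.comp measurable_snd)).const_mul k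
    have hq : ∀ s t, (cos (φ s) - cos (φ t)) ^ 2 / (s - t) ^ 2 ≤
        (cos (f s) - cos (f t)) ^ 2 / (s - t) ^ 2 + (cos (g s) - cos (g t)) ^ 2 / (s - t) ^ 2 +
          (q1 s t + q2 s t) := by
      intro s t
      have e : (cos (φ s) - cos (φ t)) ^ 2 ≤ (cos (f s) - cos (f t)) ^ 2 +
          (cos (g s) - cos (g t)) ^ 2 + 8 * (I.indicator 1 s * I'.indicator 1 t) +
            8 * (I.indicator 1 t * I'.indicator 1 s) := by
        have x1 : cos (φ s) - cos (φ t) = (m1 s + m2 s) - (m1 t + m2 t) := by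
          rw [← hm, ← hm]; ring
        have x2 : cos (f s) - cos (f t) = m1 s - m1 t := by simp only [m1]; ring
        have x3 : cos (g s) - cos (g t) = -(m2 s - m2 t) := by simp only [m2]; ring
        rw [x1, x2, x3]
        have := bound s t
        have := bound t s
        have := hprod s
        have := hprod t
        linarith
      have f1 := far s t
      have f2 := far t s
      rw [show (t - s) ^ 2 = (s - t) ^ 2 by ring] at f2
      calc _ ≤ ((cos (f s) - cos (f t)) ^ 2 +
          (cos (g s) - cos (g t)) ^ 2 + 8 * (I.indicator 1 s * I'.indicator 1 t) +
            8 * (I.indicator 1 t * I'.indicator 1 s)) / (s - t) ^ 2 := by gcongr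
        _ = (cos (f s) - cos (f t)) ^ 2 / (s - t) ^ 2 + (cos (g s) - cos (g t)) ^ 2 / (s - t) ^ 2 +
          (8 * (I.indicator (1 : ℝ → ℝ) s * I'.indicator 1 t / (s - t) ^ 2) +
            8 * (I.indicator (1 : ℝ → ℝ) t * I'.indicator 1 s / (s - t) ^ 2)) := by ring
        _ ≤ (cos (f s) - cos (f t)) ^ 2 / (s - t) ^ 2 + (cos (g s) - cos (g t)) ^ 2 / (s - t) ^ 2 +
          (8 * (1 / (4 * N ^ 2) * (I.indicator 1 s * I'.indicator 1 t)) +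
            8 * (1 / (4 * N ^ 2) * (I.indicator 1 t * I'.indicator 1 s))) := by gcongr
        _ = _ := by simp only [q1, q2, k]; field_simp; ring
    have hen : en h φ ≤ en h f + en (-h) g + J (fun _ => 0) (fun s t => q1 s t + q2 s t) := by
      unfold en
      rw [← J_add, ← J_add]
      · refine J_mono (fun x => ?_) hq
        rw [hder, hm]
        have := hprod x
        have e1 : (cos (f x) - h) = m1 x := rfl
        have e2 : (cos (g x) - -h) = -m2 x := by simp only [m2]; ring
        rw [e1, e2]
        nlinarith
      all_goals first
        | exact measurable_p Cf _
        | exact measurable_q Cf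
        | exact (measurable_p Cf _).add (measurable_p Cg _)
        | exact (measurable_q Cf).add (measurable_q Cg)
        | exact fun s t => add_nonneg (q1nn s t) (q2nn s t)
        | (intros; positivity)
    have hsum : J (fun _ => 0) (fun s t => q1 s t + q2 s t) = ENNReal.ofReal (1/(4*π)) *
      (ENNReal.ofReal (2 / N ^ 2) * (ENNReal.ofReal (2 * A) * ENNReal.ofReal (2 * A)) +
        ENNReal.ofReal (2 / N ^ 2) * (ENNReal.ofReal (2 * A) * ENNReal.ofReal (2 * A))) := by
      have v1 : volume I = ENNReal.ofReal (2 * A) := by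
        simp only [I, Real.volume_Icc]; congr 1; ring
      have v2 : volume I' = ENNReal.ofReal (2 * A) := by
        simp only [I', Real.volume_Icc]; congr 1; ring
      have b1 := lintegral_box hk mI mI'
      have b2 := lintegral_box hk mI' mI
      rw [v1, v2] at b1 b2
      have : (fun _ : ℝ => (0:ℝ)) = fun x => (fun _ => 0) x + (fun _ => 0) x := by simp
      rw [this, J_add (fun _ => le_rfl) (fun _ => le_rfl) q1nn q2nn measurable_const mq1]
      unfold J
      simp only [q1, q2]
      rw [b1, b2]
      simp only [ENNReal.ofReal_zero, lintegral_zero, mul_zero, zero_add]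
      rw [mul_add]
    rw [hsum, show en h f = en h ψ from en_comp_add h R ψ,
      show en (-h) g = en (-h) χ from en_comp_add (-h) (-R) χ] at hen
    refine (Einf_le h1 fun hE => ?_).trans hen
    refine mem_AA h1 Cφ (lm := -α) (lp := 2 * π - α) ?_ ?_ ⟨0, Or.inr ?_⟩ ⟨1, Or.inr ?_⟩ hE ?_
    · refine tendsto_const_nhds.congr' ?_
      filter_upwards [eventually_le_atBot (-2 * A - N)] with x hx
      simp only [φ]
      rw [fl x hx, gl x (by linarith)]
      ring
    · refine tendsto_const_nhds.congr' ?_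
      filter_upwards [eventually_ge_atTop (2 * A + N)] with x hx
      simp only [φ]
      rw [fr x (by linarith), gr x hx]
      ring
    · rw [hα]; simp
    · rw [hα]; simp
    · ring
  have lim : Tendsto (fun N : ℝ => en h ψ + en (-h) χ + ENNReal.ofReal (1/(4*π)) *
      (ENNReal.ofReal (2 / N ^ 2) * (ENNReal.ofReal (2 * A) * ENNReal.ofReal (2 * A)) +
        ENNReal.ofReal (2 / N ^ 2) * (ENNReal.ofReal (2 * A) * ENNReal.ofReal (2 * A)))) atTop
      (𝓝 (en h ψ + en (-h) χ)) := by
    have l0 : Tendsto (fun N : ℝ => 2 / N ^ 2) atTop (𝓝 0) :=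
      tendsto_const_nhds.div_atTop (tendsto_pow_atTop two_ne_zero)
    have l1 := ENNReal.tendsto_ofReal l0
    rw [ENNReal.ofReal_zero] at l1
    have l2 := ENNReal.Tendsto.mul_const l1 (b := ENNReal.ofReal (2 * A) * ENNReal.ofReal (2 * A))
      (Or.inr (ENNReal.mul_ne_top ENNReal.ofReal_ne_top ENNReal.ofReal_ne_top))
    rw [zero_mul] at l2
    have l3 := ENNReal.Tendsto.const_mul (l2.add l2) (a := ENNReal.ofReal (1/(4*π)))
      (Or.inr ENNReal.ofReal_ne_top)
    rw [add_zero, mul_zero] at l3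
    simpa using l3.const_add (en h ψ + en (-h) χ)
  exact ge_of_tendsto lim ((eventually_ge_atTop 1).mono step)

/-! ### Degree one -/

/-- For `0 ≤ h < 1`, `ℰ_h(1) = ℰ_h(α/π) + ℰ_h(1 − α/π)` and `ℰ_h(1)`
is not attained. -/
theorem nonexistence_degree_one (h : ℝ) (h0 : 0 ≤ h) (h1 : h < 1) :
    Einf h 1 = Einf h (alphaParam h / Real.pi) + Einf h (1 - alphaParam h / Real.pi) ∧
      ¬ ∃ φ ∈ AA h 1, energy h φ = Einf h 1 := by
  have lower : ∀ φ ∈ AA h 1, Einf h (alphaParam h / π) + Einf h (1 - alphaParam h / π) +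
      J (fun _ => 0) (gapDensity h φ) ≤ energy h φ := fun φ hφ =>
    le_of_forall_const fun c hc => lower_bound h0 h1 hφ hc
  have heq : Einf h 1 = Einf h (alphaParam h / π) + Einf h (1 - alphaParam h / π) := by
    apply le_antisymm
    · refine ENNReal.le_iInf₂_add_iInf₂ fun φ₁ hφ₁ φ₂ hφ₂ => le_of_forall_const fun c hc => ?_
      obtain ⟨ψ, hψ, e1⟩ := cutoff_small h0 h1 hφ₁ hc
      obtain ⟨χ, hχ, e2⟩ := cutoff_large h0 h1 hφ₂ hc
      rw [mul_add]
      exact (glue h1 hψ hχ (alpha_facts h0 h1).2.2).trans (add_le_add e1 e2)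
    · exact le_iInf₂ fun φ hφ => le_self_add.trans (lower φ hφ)
  refine ⟨heq, ?_⟩
  rintro ⟨φ, hφ, he⟩
  have hfin : Einf h 1 < ⊤ := he ▸ hφ.1.2.2.2
  have h2 := lower φ hφ
  rw [he, ← heq] at h2
  exact absurd h2 (not_le.2 (ENNReal.lt_add_right hfin.ne (gap_pos_of_mem h0 h1 hφ).ne'))
end
end

section
/- (Pohozaev identity.) Let h ≥ 0 with h ≠ 1 and let φ : ℝ → ℝ be a twice continuously differentiable admissible phase with E_h(φ) < ∞. Suppose there is a function g : ℝ → ℝ such that for every x ∈ ℝ the principal-value limit g(x) = lim_{ε→0⁺} (1/π) ∫_{|t−x|>ε} (cos φ(t) − cos φ(x))/((t − x)²) dt exists, and that φ satisfies the Euler–Lagrange equation φ''(x) = (h − cos φ(x) + g(x))·sin φ(x) for all x ∈ ℝ. Then ∫_ℝ φ'(x)² dx = 2 ∫_ℝ W_h(φ(x)) dx. -/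
/-!
Write `f = cos φ` and `e = φ'² / 2 - W(φ)`. Multiplying the Euler-Lagrange equation by `φ'` gives
`e' = -f' g`, and the claim is `∫ e = 0`. Testing with a compactly supported vector field `η`
yields `∫ η' e = ∫ η f' g`, and `η(x) = x` would formally give the claim. As `x f'(x)` need not
decay, the fields `η_R(x) = R ψ(x / R)` are used, where `ψ` is a smooth cutoff of the identity.

The work `∫ η f' g` is the inner variation of the `H^{1/2}` energy along `η`: up to a constant it
is the integral of
`(f(x + s) - f(x))² / s² * ((η(x) - η(x + s)) / s + (η'(x) + η'(x + s)) / 2)`.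
The bracket (`varKernel`) is bounded by `2 sup |η'|`, which does not depend on `R` for `η_R`, and
is zero at a given `(x, s)` as soon as `R` is large. Finite stray-field energy and dominated
convergence therefore send the work to zero (`integral_eq_zero_of_work`).

The variation formula is proved for the integral over `δ < s < 1 / δ` of the second difference
`(f(x + s) + f(x - s) - 2 f(x)) / s²` (`truncated_identity`): integrate by parts in `s` for fixed
`x` and in `x` for fixed `s`. The principal value `g` is the absolutely convergent integral of
this second difference over the half-line (`pv_eq`), and the boundary terms vanish as `δ → 0`
(`abs_work_le`).
-/

open Real MeasureTheory Filter Topology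
open scoped ENNReal NNReal

noncomputable section

open Set Function

/-! ### Bounds on difference quotients -/

/-- The factor `(1 + s²)⁻¹` records both the quadratic smallness at `s = 0` and boundedness for
large `s`, so the quotient by `s²` is dominated by an integrable function. -/
lemma second_diff_bound {f f1 : ℝ → ℝ} (hd : ∀ x, HasDerivAt f (f1 x) x)
    (hc1 : ContDiff ℝ 1 f1) (hb : ∀ x, |f x| ≤ 1) (M : ℝ) :
    ∃ C, 0 ≤ C ∧ ∀ x, |x| ≤ M → ∀ s, 0 < s →
      |f (x + s) + f (x - s) - 2 * f x| ≤ C * (s ^ 2 * (1 + s ^ 2)⁻¹) := by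
  obtain ⟨K, hK⟩ := (isCompact_Icc (a := -(M + 1)) (b := M + 1)).exists_bound_of_continuousOn
    (hc1.continuous_deriv le_rfl).continuousOn
  refine ⟨4 * |K| + 8, by positivity, fun x hx s hs => ?_⟩
  have hx' := abs_le.1 hx
  rcases le_total s 1 with h1 | h1
  · have hlip : ∀ r ∈ Icc (0 : ℝ) s, |f1 (x + r) - f1 (x - r)| ≤ 2 * |K| * s := by
      intro r hr
      have := (convex_Icc (-(M + 1)) (M + 1)).norm_image_sub_le_of_norm_deriv_le (𝕜 := ℝ)
        (f := f1) (C := |K|) (x := x - r) (y := x + r)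
        (fun y _ => (hc1.differentiable one_ne_zero) y)
        (fun y hy => (hK y hy).trans (le_abs_self K))
        ⟨by linarith [hr.1, hr.2], by linarith [hr.1, hr.2]⟩
        ⟨by linarith [hr.1, hr.2], by linarith [hr.1, hr.2]⟩
      rw [Real.norm_eq_abs, Real.norm_eq_abs] at this
      refine this.trans ?_
      rw [show x + r - (x - r) = 2 * r by ring,
        abs_of_nonneg (show (0 : ℝ) ≤ 2 * r by linarith [hr.1])]
      nlinarith [abs_nonneg K, hr.2]
    have := norm_image_sub_le_of_norm_deriv_le_segment' (a := 0) (b := s)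
      (f := fun r => f (x + r) + f (x - r) - 2 * f x)
      (f' := fun r => f1 (x + r) - f1 (x - r)) (C := 2 * |K| * s)
      (fun r _ => by
        have a1 := (hd (x + r)).comp_const_add x r
        have a2 := (hd (x - r)).comp_const_sub x r
        exact ((a1.add a2).sub_const _ |>.congr_deriv (by ring)).hasDerivWithinAt)
      (fun r hr => hlip r ⟨hr.1, hr.2.le⟩) s ⟨hs.le, le_rfl⟩
    simp only [add_zero, sub_zero, Real.norm_eq_abs] at this
    rw [show f (x + s) + f (x - s) - 2 * f x - (f x + f x - 2 * f x)
      = f (x + s) + f (x - s) - 2 * f x by ring] at this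
    refine this.trans ?_
    rw [← div_eq_mul_inv, mul_div_assoc', le_div_iff₀ (by positivity)]
    nlinarith [mul_nonneg (abs_nonneg K) (sq_nonneg s),
      mul_nonneg (mul_nonneg (abs_nonneg K) (sq_nonneg s)) (show 0 ≤ 1 - s ^ 2 by nlinarith)]
  · have e1 := abs_le.1 (hb (x + s))
    have e2 := abs_le.1 (hb (x - s))
    have e3 := abs_le.1 (hb x)
    have : |f (x + s) + f (x - s) - 2 * f x| ≤ 4 := abs_le.2 ⟨by linarith, by linarith⟩
    refine this.trans ?_
    rw [← div_eq_mul_inv, mul_div_assoc', le_div_iff₀ (by positivity)]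
    nlinarith [mul_nonneg (abs_nonneg K) (sq_nonneg s)]

lemma first_diff_bound {f f1 : ℝ → ℝ} (hd : ∀ x, HasDerivAt f (f1 x) x)
    (hc1 : Continuous f1) (M : ℝ) :
    ∃ C, 0 ≤ C ∧ ∀ x, |x| ≤ M → ∀ s, 0 < s → s ≤ 1 → |f (x + s) - f (x - s)| ≤ C * s := by
  obtain ⟨K, hK⟩ := (isCompact_Icc (a := -(M + 1)) (b := M + 1)).exists_bound_of_continuousOn
    hc1.continuousOn
  refine ⟨2 * |K|, by positivity, fun x hx s hs h1 => ?_⟩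
  have hx' := abs_le.1 hx
  have := (convex_Icc (-(M + 1)) (M + 1)).norm_image_sub_le_of_norm_hasDerivWithin_le
        (f := f) (f' := f1) (C := |K|) (x := x - s) (y := x + s)
        (fun y _ => (hd y).hasDerivWithinAt)
        (fun y hy => (hK y hy).trans (le_abs_self K))
        ⟨by linarith, by linarith⟩ ⟨by linarith, by linarith⟩
  rw [Real.norm_eq_abs, Real.norm_eq_abs] at this
  refine this.trans ?_
  rw [show x + s - (x - s) = 2 * s by ring,
    abs_of_nonneg (show (0 : ℝ) ≤ 2 * s by linarith)]
  linarith

lemma integrable_strip {a b : ℝ} (ha : 0 < a) (hab : a ≤ b) {F : ℝ → ℝ → ℝ}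
    (hF : ContinuousOn (uncurry F) (Ioi 0 ×ˢ univ)) {M : ℝ}
    (hz : ∀ s x, M < |x| → F s x = 0) :
    Integrable (uncurry F) ((volume.restrict (uIoc a b)).prod volume) := by
  have h1 : IntegrableOn (uncurry F) (Icc a b ×ˢ Icc (-M) M) (volume.prod volume) := by
    refine ContinuousOn.integrableOn_compact (isCompact_Icc.prod isCompact_Icc) (hF.mono ?_)
    exact prod_mono (fun s hs => lt_of_lt_of_le ha hs.1) (subset_univ _)
  have h2 : IntegrableOn (uncurry F) (uIoc a b ×ˢ univ) (volume.prod volume) := by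
    rw [uIoc_of_le hab]
    refine h1.of_forall_sdiff_eq_zero (measurableSet_Ioc.prod MeasurableSet.univ) ?_
    rintro ⟨s, x⟩ ⟨⟨hs, -⟩, hn⟩
    apply hz
    by_contra! hx
    exact hn ⟨Ioc_subset_Icc_self hs, abs_le.1 hx⟩
  rw [IntegrableOn, ← Measure.prod_restrict, Measure.restrict_univ] at h2
  exact h2

/-! ### The first variation of the stray-field energy -/

/-- The kernel obtained from the first variation of `(f t - f x)² / (t - x)²` under the flow of
the vector field `η` with derivative `η1`; `s` stands for `t - x`. -/
def varKernel (η η1 : ℝ → ℝ) (x s : ℝ) : ℝ := (η x - η (x + s)) / s + (η1 x + η1 (x + s)) / 2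

/-- The part of the variation formula at a fixed distance `s`, after integration by parts in `x`;
the contribution of `x - s` is carried to that of `x + s` by a translation. -/
lemma integral_slice {f f1 η η1 : ℝ → ℝ} (hd : ∀ x, HasDerivAt f (f1 x) x)
    (hc1 : Continuous f1) (hη : ∀ x, HasDerivAt η (η1 x) x) (hη1 : Continuous η1)
    (hs : HasCompactSupport η) (hs1 : HasCompactSupport η1) {s : ℝ} (hs0 : 0 < s) :
    (∫ x, η x * (((f (x + s) - f x) ^ 2 - (f (x - s) - f x) ^ 2) / s ^ 3
      - ((f (x + s) - f x) * (f1 (x + s) - f1 x)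
        + (f (x - s) - f x) * (f1 (x - s) - f1 x)) / s ^ 2))
    = ∫ x, (f (x + s) - f x) ^ 2 / s ^ 2 * varKernel η η1 x s := by
  have hfc : Continuous f := continuous_iff_continuousAt.2 fun x => (hd x).continuousAt
  have hηc : Continuous η := continuous_iff_continuousAt.2 fun x => (hη x).continuousAt
  have I : ∀ w : ℝ → ℝ, Continuous w → Integrable fun x => η x * w x := fun w hw =>
    (hηc.mul hw).integrable_of_hasCompactSupport hs.mul_right
  have I1 : ∀ w : ℝ → ℝ, Continuous w → Integrable fun x => η1 x * w x := fun w hw =>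
    (hη1.mul hw).integrable_of_hasCompactSupport hs1.mul_right
  -- integration by parts in `x`
  have ibp : (∫ x, η x * (2 * ((f (x + s) - f x) * (f1 (x + s) - f1 x)
        + (f (x - s) - f x) * (f1 (x - s) - f1 x))))
      = - ∫ x, η1 x * ((f (x + s) - f x) ^ 2 + (f (x - s) - f x) ^ 2) := by
    refine integral_mul_deriv_eq_deriv_mul_of_integrable
      (v := fun x => (f (x + s) - f x) ^ 2 + (f (x - s) - f x) ^ 2)
      (fun x _ => hη x) (fun x _ => ?_) (I _ (by fun_prop)) (I1 _ (by fun_prop))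
      (I _ (by fun_prop))
    have a1 := (((hd (x + s)).comp_add_const x s).sub (hd x)).pow 2
    have a2 := (((hd (x - s)).comp_sub_const x s).sub (hd x)).pow 2
    refine (a1.add a2).congr_deriv ?_
    simp only [Pi.sub_apply, Nat.cast_ofNat]
    ring
  have e1 : (∫ x, η x * (((f (x + s) - f x) ^ 2 - (f (x - s) - f x) ^ 2) / s ^ 3
      - ((f (x + s) - f x) * (f1 (x + s) - f1 x)
        + (f (x - s) - f x) * (f1 (x - s) - f1 x)) / s ^ 2))
      = (∫ x, (η x / s + η1 x / 2) * ((f (x + s) - f x) ^ 2 / s ^ 2))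
        + ∫ x, (- η x / s + η1 x / 2) * ((f (x - s) - f x) ^ 2 / s ^ 2) := by
    rw [← integral_add]
    · have : ∀ x, η x * (((f (x + s) - f x) ^ 2 - (f (x - s) - f x) ^ 2) / s ^ 3
          - ((f (x + s) - f x) * (f1 (x + s) - f1 x)
            + (f (x - s) - f x) * (f1 (x - s) - f1 x)) / s ^ 2)
          = η x * (((f (x + s) - f x) ^ 2 - (f (x - s) - f x) ^ 2) / s ^ 3)
          - (1 / (2 * s ^ 2)) * (η x * (2 * ((f (x + s) - f x) * (f1 (x + s) - f1 x)
            + (f (x - s) - f x) * (f1 (x - s) - f1 x)))) := fun x => by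
        field_simp
      simp_rw [this]
      rw [integral_sub (I _ (by fun_prop)) ((I _ (by fun_prop)).const_mul _),
        integral_const_mul, ibp, mul_neg, sub_neg_eq_add, ← integral_const_mul,
        ← integral_add (I _ (by fun_prop)) ((I1 _ (by fun_prop)).const_mul _)]
      congr 1; ext x; field_simp; ring
    · refine ((I (fun x => (f (x + s) - f x) ^ 2 / s ^ 3) (by fun_prop)).add
        (I1 (fun x => (f (x + s) - f x) ^ 2 / s ^ 2 / 2) (by fun_prop))).congr
        (Eventually.of_forall fun x => ?_)
      simp only [Pi.add_apply]; field_simp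
    · refine ((I (fun x => -(f (x - s) - f x) ^ 2 / s ^ 3) (by fun_prop)).add
        (I1 (fun x => (f (x - s) - f x) ^ 2 / s ^ 2 / 2) (by fun_prop))).congr
        (Eventually.of_forall fun x => ?_)
      simp only [Pi.add_apply]; field_simp
  have e2 := integral_add_right_eq_self (μ := (volume : Measure ℝ))
    (fun x => (- η x / s + η1 x / 2) * ((f (x - s) - f x) ^ 2 / s ^ 2)) s
  have i2 : Integrable fun x => (- η x / s + η1 x / 2) * ((f (x - s) - f x) ^ 2 / s ^ 2) := by
    refine ((I (fun x => -(f (x - s) - f x) ^ 2 / s ^ 3) (by fun_prop)).add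
        (I1 (fun x => (f (x - s) - f x) ^ 2 / s ^ 2 / 2) (by fun_prop))).congr
        (Eventually.of_forall fun x => ?_)
    simp only [Pi.add_apply]; field_simp
  rw [e1, ← e2, ← integral_add _ (i2.comp_add_right s)]
  · congr 1; ext x
    simp only [varKernel, add_sub_cancel_right]; ring
  · refine ((I (fun x => (f (x + s) - f x) ^ 2 / s ^ 3) (by fun_prop)).add
        (I1 (fun x => (f (x + s) - f x) ^ 2 / s ^ 2 / 2) (by fun_prop))).congr
        (Eventually.of_forall fun x => ?_)
    simp only [Pi.add_apply]; field_simp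

/-- Truncated form of the variation formula. The integrand is a sum of
`(∂_s - ∂_x)`- and `(-∂_s - ∂_x)`-derivatives of squares, and the `∂_s` part leaves the two boundary terms. -/
lemma truncated_identity {f f1 η η1 : ℝ → ℝ} (hd : ∀ x, HasDerivAt f (f1 x) x)
    (hc1 : Continuous f1) (hη : ∀ x, HasDerivAt η (η1 x) x) (hη1 : Continuous η1)
    (hs : HasCompactSupport η) (hs1 : HasCompactSupport η1) {a b : ℝ} (ha : 0 < a)
    (hab : a ≤ b) :
    (∫ x, η x * f1 x * ∫ s in a..b, (f (x + s) + f (x - s) - 2 * f x) / s ^ 2)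
    = (1 / 2) * (∫ x, η x * (((f (x + b) - f x) ^ 2 - (f (x - b) - f x) ^ 2) / b ^ 2
        - ((f (x + a) - f x) ^ 2 - (f (x - a) - f x) ^ 2) / a ^ 2))
      + ∫ s in a..b, ∫ x, (f (x + s) - f x) ^ 2 / s ^ 2 * varKernel η η1 x s := by
  have hfc : Continuous f := continuous_iff_continuousAt.2 fun x => (hd x).continuousAt
  have hηc : Continuous η := continuous_iff_continuousAt.2 fun x => (hη x).continuousAt
  obtain ⟨M, hM⟩ : ∃ M, ∀ x, M < |x| → η x = 0 := by
    obtain ⟨M, hM⟩ := hs.isCompact.isBounded.exists_norm_le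
    refine ⟨M, fun x hx => ?_⟩
    by_contra h
    exact absurd (hM x (subset_tsupport _ h)) (by simpa using hx)
  set H : ℝ → ℝ → ℝ := fun s x => ((f (x + s) - f x) ^ 2 - (f (x - s) - f x) ^ 2) / s ^ 3
      - ((f (x + s) - f x) * (f1 (x + s) - f1 x)
        + (f (x - s) - f x) * (f1 (x - s) - f1 x)) / s ^ 2 with hH
  have hHc : ContinuousOn (uncurry fun s x => η x * H s x) (Ioi 0 ×ˢ univ) := by
    have n2 : ∀ p ∈ (Ioi (0 : ℝ) ×ˢ (univ : Set ℝ)), p.1 ^ 2 ≠ 0 := fun p hp =>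
      pow_ne_zero _ (ne_of_gt hp.1)
    have n3 : ∀ p ∈ (Ioi (0 : ℝ) ×ˢ (univ : Set ℝ)), p.1 ^ 3 ≠ 0 := fun p hp =>
      pow_ne_zero _ (ne_of_gt hp.1)
    simp only [hH, uncurry_def]
    refine ContinuousOn.mul (by fun_prop) (ContinuousOn.sub ?_ ?_)
    · exact ContinuousOn.div (by fun_prop) (by fun_prop) n3
    · exact ContinuousOn.div (by fun_prop) (by fun_prop) n2
  have hint := integrable_strip ha hab hHc (M := M) (fun s x hx => by simp [hM x hx])
  have pos : ∀ s ∈ uIcc a b, 0 < s := fun s hs => by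
    rw [uIcc_of_le hab] at hs; exact lt_of_lt_of_le ha hs.1
  -- integration by parts in `s` for fixed `x`
  have pw : ∀ x, f1 x * ∫ s in a..b, (f (x + s) + f (x - s) - 2 * f x) / s ^ 2
      = (1 / 2) * (((f (x + b) - f x) ^ 2 - (f (x - b) - f x) ^ 2) / b ^ 2
        - ((f (x + a) - f x) ^ 2 - (f (x - a) - f x) ^ 2) / a ^ 2)
        + ∫ s in a..b, H s x := by
    intro x
    have n2 : ∀ s ∈ uIcc a b, s ^ 2 ≠ 0 := fun s hs => (pow_pos (pos s hs) 2).ne'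
    have n3 : ∀ s ∈ uIcc a b, s ^ 3 ≠ 0 := fun s hs => (pow_pos (pos s hs) 3).ne'
    have c1 : ContinuousOn (fun s => ((f (x + s) - f x) * f1 (x + s)
        + (f (x - s) - f x) * f1 (x - s)) / s ^ 2
        - ((f (x + s) - f x) ^ 2 - (f (x - s) - f x) ^ 2) / s ^ 3) (uIcc a b) :=
      (ContinuousOn.div (by fun_prop) (by fun_prop) n2).sub
        (ContinuousOn.div (by fun_prop) (by fun_prop) n3)
    have c2 : ContinuousOn (fun s => H s x) (uIcc a b) :=
      (ContinuousOn.div (by fun_prop) (by fun_prop) n3).sub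
        (ContinuousOn.div (by fun_prop) (by fun_prop) n2)
    have ftc := intervalIntegral.integral_eq_sub_of_hasDerivAt (a := a) (b := b)
      (f := fun s => (1 / 2) * (((f (x + s) - f x) ^ 2 - (f (x - s) - f x) ^ 2) / s ^ 2))
      (f' := fun s => ((f (x + s) - f x) * f1 (x + s)
        + (f (x - s) - f x) * f1 (x - s)) / s ^ 2
        - ((f (x + s) - f x) ^ 2 - (f (x - s) - f x) ^ 2) / s ^ 3)
      (fun s hs => by
        have hs' := (pos s hs).ne'
        have a1 := (((hd (x + s)).comp_const_add x s).sub_const (f x)).pow 2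
        have a2 := (((hd (x - s)).comp_const_sub x s).sub_const (f x)).pow 2
        have a3 := ((a1.sub a2).div (hasDerivAt_pow 2 s) (n2 s hs)).const_mul (1 / 2)
        refine a3.congr_deriv ?_
        simp only [Pi.sub_apply, Pi.pow_apply, Nat.cast_ofNat]
        field_simp
        ring) c1.intervalIntegrable
    rw [mul_sub, ← ftc, ← intervalIntegral.integral_const_mul,
      ← intervalIntegral.integral_add c1.intervalIntegrable c2.intervalIntegrable]
    refine intervalIntegral.integral_congr fun s hs => ?_
    have hs' := (pos s hs).ne'
    simp only [hH]
    field_simp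
    ring
  have hint2 : Integrable fun x => ∫ s in a..b, η x * H s x := by
    simp_rw [intervalIntegral.integral_of_le hab]
    have := hint.integral_prod_right
    rwa [uIoc_of_le hab] at this
  have hint1 : Integrable fun x => (1 / 2) *
      (η x * (((f (x + b) - f x) ^ 2 - (f (x - b) - f x) ^ 2) / b ^ 2
        - ((f (x + a) - f x) ^ 2 - (f (x - a) - f x) ^ 2) / a ^ 2)) :=
    ((hηc.mul (by fun_prop)).integrable_of_hasCompactSupport hs.mul_right).const_mul _
  calc _ = ∫ x, ((1 / 2) *
      (η x * (((f (x + b) - f x) ^ 2 - (f (x - b) - f x) ^ 2) / b ^ 2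
        - ((f (x + a) - f x) ^ 2 - (f (x - a) - f x) ^ 2) / a ^ 2))
        + ∫ s in a..b, η x * H s x) := by
        congr 1; ext x
        rw [mul_assoc, pw, intervalIntegral.integral_const_mul]; ring
    _ = _ := by
      rw [integral_add hint1 hint2, integral_const_mul,
        ← intervalIntegral_integral_swap hint]
      congr 1
      refine intervalIntegral.integral_congr fun s hs' => ?_
      exact integral_slice hd hc1 hη hη1 hs hs1 (pos s hs')

/-! ### The principal value -/

lemma integrableOn_diff_quot {f : ℝ → ℝ} (hf : Continuous f) (hb : ∀ x, |f x| ≤ 1) (x : ℝ)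
    {ε : ℝ} (hε : 0 < ε) : IntegrableOn (fun s => (f (x + s) - f x) / s ^ 2) (Ioi ε) := by
  have h2 : IntegrableOn (fun s : ℝ => 2 * s ^ (-2 : ℝ)) (Ioi ε) :=
    (integrableOn_Ioi_rpow_of_lt (by norm_num) hε).const_mul 2
  refine h2.mono' (Measurable.aestronglyMeasurable (by fun_prop)) ?_
  refine (ae_restrict_mem measurableSet_Ioi).mono fun s hs => ?_
  have hs0 : 0 < s := lt_trans hε hs
  rw [Real.norm_eq_abs, abs_div, abs_of_pos (pow_pos hs0 2), Real.rpow_neg hs0.le,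
    ← div_eq_mul_inv]
  norm_num only [Real.rpow_two]
  gcongr
  have e1 := abs_le.1 (hb (x + s))
  have e3 := abs_le.1 (hb x)
  exact abs_le.2 ⟨by linarith, by linarith⟩

/-- The integral over the complement of a symmetric interval, folded onto a half-line. -/
lemma truncated_pv_eq {f : ℝ → ℝ} (hf : Continuous f) (hb : ∀ x, |f x| ≤ 1) (x : ℝ)
    {ε : ℝ} (hε : 0 < ε) :
    (∫ t in {t : ℝ | ε < |t - x|}, (f t - f x) / (t - x) ^ 2)
      = ∫ s in Ioi ε, (f (x + s) + f (x - s) - 2 * f x) / s ^ 2 := by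
  have hset : {t : ℝ | ε < |t - x|} = Iio (x - ε) ∪ Ioi (x + ε) := by
    ext t; simp only [mem_ofPred_eq, lt_abs, mem_union, mem_Iio, mem_Ioi]
    constructor
    · rintro (h | h)
      · right; linarith
      · left; linarith
    · rintro (h | h)
      · right; linarith
      · left; linarith
  have hp : (∫ t in Ioi (x + ε), (f t - f x) / (t - x) ^ 2)
      = ∫ s in Ioi ε, (f (x + s) - f x) / s ^ 2 := by
    have := (measurePreserving_add_left volume x).setIntegral_preimage_emb
      (measurableEmbedding_addLeft x) (fun t => (f t - f x) / (t - x) ^ 2) (Ioi (x + ε))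
    rw [← this]; simp
  have hm : (∫ t in Iio (x - ε), (f t - f x) / (t - x) ^ 2)
      = ∫ s in Ioi ε, (f (x - s) - f x) / s ^ 2 := by
    have := (Measure.measurePreserving_sub_left volume x).setIntegral_preimage_emb
      (MeasurableEquiv.subLeft x).measurableEmbedding
      (fun t => (f t - f x) / (t - x) ^ 2) (Iio (x - ε))
    rw [← this]; simp
  have ip := integrableOn_diff_quot hf hb x hε
  have im : IntegrableOn (fun s => (f (x - s) - f x) / s ^ 2) (Ioi ε) := by
    have := integrableOn_diff_quot (f := fun y => f (-y)) (by fun_prop) (fun y => hb _) (-x) hε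
    refine this.congr_fun (fun s _ => ?_) measurableSet_Ioi
    simp only [neg_add_rev, neg_neg]; ring_nf
  have ip' : IntegrableOn (fun t => (f t - f x) / (t - x) ^ 2) (Ioi (x + ε)) := by
    have := ((measurePreserving_add_left volume x).integrableOn_comp_preimage
      (measurableEmbedding_addLeft x) (f := fun t => (f t - f x) / (t - x) ^ 2)
      (s := Ioi (x + ε))).1
    apply this; simpa [Function.comp_def] using ip
  have im' : IntegrableOn (fun t => (f t - f x) / (t - x) ^ 2) (Iio (x - ε)) := by
    have := ((Measure.measurePreserving_sub_left volume x).integrableOn_comp_preimage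
      (MeasurableEquiv.subLeft x).measurableEmbedding
      (f := fun t => (f t - f x) / (t - x) ^ 2) (s := Iio (x - ε))).1
    apply this; simpa [Function.comp_def] using im
  rw [hset, setIntegral_union _ measurableSet_Ioi im' ip', hp, hm, ← integral_add im ip]
  · congr 1; ext s; ring
  · rw [Set.disjoint_left]; intro t h1 h2
    simp only [mem_Iio, mem_Ioi] at h1 h2; linarith

lemma integrableOn_second_diff {f : ℝ → ℝ} (hf : Continuous f) {x C : ℝ}
    (hC : ∀ s, 0 < s →
      |f (x + s) + f (x - s) - 2 * f x| ≤ C * (s ^ 2 * (1 + s ^ 2)⁻¹)) :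
    (∀ s, 0 < s → ‖(f (x + s) + f (x - s) - 2 * f x) / s ^ 2‖ ≤ C * (1 + s ^ 2)⁻¹) ∧
    IntegrableOn (fun s => (f (x + s) + f (x - s) - 2 * f x) / s ^ 2) (Ioi 0) := by
  have h : ∀ s, 0 < s →
      ‖(f (x + s) + f (x - s) - 2 * f x) / s ^ 2‖ ≤ C * (1 + s ^ 2)⁻¹ := fun s hs => by
    rw [Real.norm_eq_abs, abs_div, abs_of_pos (pow_pos hs 2), div_le_iff₀ (pow_pos hs 2)]
    exact (hC s hs).trans_eq (by ring)
  refine ⟨h, ?_⟩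
  refine (integrable_inv_one_add_sq.const_mul C).integrableOn.mono'
    (Measurable.aestronglyMeasurable (by fun_prop)) ?_
  exact (ae_restrict_mem measurableSet_Ioi).mono fun s hs => h s hs

/-- For `C²` bounded functions the principal value is an absolutely convergent integral of
second differences. -/
lemma pv_eq {f : ℝ → ℝ} (hf : Continuous f) (hb : ∀ x, |f x| ≤ 1) {x C y : ℝ}
    (hC : ∀ s, 0 < s →
      |f (x + s) + f (x - s) - 2 * f x| ≤ C * (s ^ 2 * (1 + s ^ 2)⁻¹))
    (hg : Tendsto (fun ε : ℝ => (1 / π) * ∫ t in {t : ℝ | ε < |t - x|},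
      (f t - f x) / (t - x) ^ 2) (𝓝[>] 0) (𝓝 y)) :
    ∫ s in Ioi 0, (f (x + s) + f (x - s) - 2 * f x) / s ^ 2 = π * y := by
  have hi := (integrableOn_second_diff hf hC).2
  have hcov : AECover (volume.restrict (Ioi (0 : ℝ))) (𝓝[>] 0) (fun ε : ℝ => Ioi ε) :=
    aecover_Ioi_of_Ioi (tendsto_nhdsWithin_of_tendsto_nhds tendsto_id)
  have h1 := (hcov.integral_tendsto_of_countably_generated hi).const_mul (1 / π)
  have h2 := tendsto_nhds_unique (h1.congr' ?_) hg
  · rw [← h2]; field_simp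
  · filter_upwards [self_mem_nhdsWithin] with ε (hε : 0 < ε)
    rw [truncated_pv_eq hf hb x hε, Measure.restrict_restrict measurableSet_Ioi,
      inter_eq_self_of_subset_left (Ioi_subset_Ioi hε.le)]

lemma tendsto_truncated {w : ℝ → ℝ} (hw : IntegrableOn w (Ioi 0)) :
    Tendsto (fun δ : ℝ => ∫ s in δ..δ⁻¹, w s) (𝓝[>] 0) (𝓝 (∫ s in Ioi 0, w s)) := by
  have hcov : AECover (volume.restrict (Ioi (0 : ℝ))) (𝓝[>] 0) (fun δ : ℝ => Ioc δ δ⁻¹) := by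
    refine ⟨?_, fun _ => measurableSet_Ioc⟩
    refine (ae_restrict_mem measurableSet_Ioi).mono fun s (hs : 0 < s) => ?_
    have h1 : ∀ᶠ δ in 𝓝[>] (0 : ℝ), δ < s :=
      (eventually_lt_nhds hs).filter_mono nhdsWithin_le_nhds
    have h2 : ∀ᶠ δ in 𝓝[>] (0 : ℝ), s ≤ δ⁻¹ :=
      tendsto_inv_nhdsGT_zero.eventually (eventually_ge_atTop s)
    filter_upwards [h1, h2] with δ a b using ⟨a, b⟩
  refine (hcov.integral_tendsto_of_countably_generated hw).congr' ?_
  have h3 : ∀ᶠ δ in 𝓝[>] (0 : ℝ), δ < 1 :=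
    (eventually_lt_nhds one_pos).filter_mono nhdsWithin_le_nhds
  filter_upwards [self_mem_nhdsWithin, h3] with δ (h0 : 0 < δ) h1
  have : δ ≤ δ⁻¹ := h1.le.trans ((one_le_inv₀ h0).2 h1.le)
  rw [intervalIntegral.integral_of_le this, Measure.restrict_restrict measurableSet_Ioc,
    inter_eq_self_of_subset_left (show Ioc δ δ⁻¹ ⊆ Ioi 0 from fun s hs => h0.trans hs.1)]

/-! ### Removing the truncation -/

/-- Bound for the work done by a compactly supported vector field against the nonlocal term.
The integral on the left is, up to a constant factor, the first variation of the `H^{1/2}`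
energy; the right side involves only the
energy density and the variation kernel, so no decay of `x * f' x` enters. -/
lemma abs_work_le {f f1 η η1 g : ℝ → ℝ} (hd : ∀ x, HasDerivAt f (f1 x) x)
    (hc1 : ContDiff ℝ 1 f1) (hb : ∀ x, |f x| ≤ 1)
    (hη : ∀ x, HasDerivAt η (η1 x) x) (hη1 : Continuous η1)
    (hs : HasCompactSupport η) (hs1 : HasCompactSupport η1)
    (hg : ∀ x : ℝ, Tendsto (fun ε : ℝ => (1 / π) * ∫ t in {t : ℝ | ε < |t - x|},
      (f t - f x) / (t - x) ^ 2) (𝓝[>] 0) (𝓝 (g x)))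
    (hI : Integrable fun p : ℝ × ℝ =>
      (f (p.1 + p.2) - f p.1) ^ 2 / p.2 ^ 2 * varKernel η η1 p.1 p.2) :
    |∫ x, η x * f1 x * (π * g x)| ≤ ∫ p : ℝ × ℝ,
      |(f (p.1 + p.2) - f p.1) ^ 2 / p.2 ^ 2 * varKernel η η1 p.1 p.2| := by
  have hfc : Continuous f := continuous_iff_continuousAt.2 fun x => (hd x).continuousAt
  have hηc : Continuous η := continuous_iff_continuousAt.2 fun x => (hη x).continuousAt
  have hf1c : Continuous f1 := hc1.continuous
  obtain ⟨M, hM⟩ : ∃ M, ∀ x, M < |x| → η x = 0 := by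
    obtain ⟨M, hM⟩ := hs.isCompact.isBounded.exists_norm_le
    refine ⟨M, fun x hx => ?_⟩
    by_contra h
    exact absurd (hM x (subset_tsupport _ h)) (by simpa using hx)
  obtain ⟨C, hC0, hC⟩ := second_diff_bound hd hc1 hb M
  obtain ⟨C', hC'0, hC'⟩ := first_diff_bound hd hf1c M
  have hsmall : ∀ᶠ δ in 𝓝[>] (0 : ℝ), 0 < δ ∧ δ ≤ 1 ∧ δ ≤ δ⁻¹ := by
    have h3 : ∀ᶠ δ in 𝓝[>] (0 : ℝ), δ < 1 :=
      (eventually_lt_nhds one_pos).filter_mono nhdsWithin_le_nhds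
    filter_upwards [self_mem_nhdsWithin, h3] with δ (h0 : 0 < δ) h1
    exact ⟨h0, h1.le, h1.le.trans ((one_le_inv₀ h0).2 h1.le)⟩
  have hηf : Integrable fun x => η x * f1 x :=
    (hηc.mul hf1c).integrable_of_hasCompactSupport hs.mul_right
  have hηi : Integrable fun x => |η x| :=
    (hηc.integrable_of_hasCompactSupport hs).norm
  have hlim : Tendsto (fun δ : ℝ => ∫ x, η x * f1 x *
      ∫ s in δ..δ⁻¹, (f (x + s) + f (x - s) - 2 * f x) / s ^ 2) (𝓝[>] 0)
      (𝓝 (∫ x, η x * f1 x * (π * g x))) := by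
    refine tendsto_integral_filter_of_dominated_convergence
      (fun x => |η x * f1 x| * (C * π)) ?_ ?_ (hηf.norm.mul_const _) ?_
    · filter_upwards [hsmall] with δ ⟨h0, h1, h2⟩
      refine ((hηc.mul hf1c).measurable.aestronglyMeasurable).mul ?_
      simp_rw [intervalIntegral.integral_of_le h2]
      refine StronglyMeasurable.aestronglyMeasurable ?_
      refine StronglyMeasurable.integral_prod_right
        (f := fun x s : ℝ => (f (x + s) + f (x - s) - 2 * f x) / s ^ 2) ?_
      exact Measurable.stronglyMeasurable (by fun_prop)
    · filter_upwards [hsmall] with δ ⟨h0, h1, h2⟩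
      refine Eventually.of_forall fun x => ?_
      rw [norm_mul, Real.norm_eq_abs]
      by_cases hx : M < |x|
      · simp [hM x hx]
      · refine mul_le_mul_of_nonneg_left ?_ (abs_nonneg _)
        have hb1 := (integrableOn_second_diff hfc (hC x (not_lt.1 hx))).1
        have hi : Integrable fun s : ℝ => C * (1 + s ^ 2)⁻¹ :=
          integrable_inv_one_add_sq.const_mul C
        rw [intervalIntegral.integral_of_le h2]
        refine (norm_integral_le_of_norm_le hi.integrableOn
          ((ae_restrict_mem measurableSet_Ioc).mono fun s hs => hb1 s (h0.trans hs.1))).trans ?_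
        refine (setIntegral_le_integral hi (Eventually.of_forall fun s => ?_)).trans_eq ?_
        · simp only [Pi.zero_apply]; positivity
        · rw [integral_const_mul, integral_univ_inv_one_add_sq]
    · refine Eventually.of_forall fun x => ?_
      by_cases hx : M < |x|
      · simp [hM x hx]
      · have hCx := hC x (not_lt.1 hx)
        rw [← pv_eq hfc hb hCx (hg x)]
        exact (tendsto_truncated (integrableOn_second_diff hfc hCx).2).const_mul _
  set J := ∫ p : ℝ × ℝ,
      |(f (p.1 + p.2) - f p.1) ^ 2 / p.2 ^ 2 * varKernel η η1 p.1 p.2| with hJ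
  -- the boundary terms of the truncated identity are `O(δ)`: the one at `s = δ⁻¹` because `f` is
  -- bounded, the one at `s = δ` because `u² - v²` is the product of `u + v = O(δ²)` and
  -- `u - v = O(δ)`, for `u = f (x + δ) - f x` and `v = f (x - δ) - f x`
  have hbd : ∀ᶠ δ in 𝓝[>] (0 : ℝ), |∫ x, η x * f1 x *
      ∫ s in δ..δ⁻¹, (f (x + s) + f (x - s) - 2 * f x) / s ^ 2|
      ≤ (1 / 2) * ((∫ x, |η x|) * (8 * δ ^ 2 + C * C' * δ)) + J := by
    filter_upwards [hsmall] with δ ⟨h0, h1, h2⟩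
    rw [truncated_identity hd hf1c hη hη1 hs hs1 h0 h2]
    refine (abs_add_le _ _).trans (add_le_add ?_ ?_)
    · rw [abs_mul, abs_of_pos (by norm_num : (0 : ℝ) < 1 / 2), ← integral_mul_const]
      refine mul_le_mul_of_nonneg_left ?_ (by norm_num)
      rw [← Real.norm_eq_abs]
      refine norm_integral_le_of_norm_le (hηi.mul_const _) (Eventually.of_forall fun x => ?_)
      rw [Real.norm_eq_abs, abs_mul]
      by_cases hx : M < |x|
      · simp [hM x hx]
      · refine mul_le_mul_of_nonneg_left ((abs_sub _ _).trans (add_le_add ?_ ?_)) (abs_nonneg _)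
        · rw [div_eq_mul_inv, ← inv_pow, inv_inv, abs_mul, abs_of_pos (pow_pos h0 2)]
          refine mul_le_mul_of_nonneg_right ?_ (by positivity)
          have e1 := abs_le.1 (hb (x + δ⁻¹))
          have e2 := abs_le.1 (hb (x - δ⁻¹))
          have e3 := abs_le.1 (hb x)
          have q1 : (f (x + δ⁻¹) - f x) ^ 2 ≤ 4 := by nlinarith
          have q2 : (f (x - δ⁻¹) - f x) ^ 2 ≤ 4 := by nlinarith
          refine abs_le.2 ⟨?_, ?_⟩ <;>
            nlinarith [sq_nonneg (f (x + δ⁻¹) - f x), sq_nonneg (f (x - δ⁻¹) - f x)]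
        · rw [abs_div, abs_of_pos (pow_pos h0 2), div_le_iff₀ (pow_pos h0 2)]
          rw [show (f (x + δ) - f x) ^ 2 - (f (x - δ) - f x) ^ 2
            = (f (x + δ) + f (x - δ) - 2 * f x) * (f (x + δ) - f (x - δ)) by ring, abs_mul]
          have k1 := hC x (not_lt.1 hx) δ h0
          have k2 := hC' x (not_lt.1 hx) δ h0 h1
          have k3 : δ ^ 2 * (1 + δ ^ 2)⁻¹ ≤ δ ^ 2 :=
            mul_le_of_le_one_right (by positivity) (inv_le_one_of_one_le₀ (by nlinarith))
          have k4 := k1.trans (mul_le_mul_of_nonneg_left k3 hC0)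
          refine (mul_le_mul k4 k2 (abs_nonneg _) (by positivity)).trans_eq (by ring)
    · rw [intervalIntegral.integral_of_le h2]
      have hsw : Integrable (fun p : ℝ × ℝ =>
          (f (p.2 + p.1) - f p.2) ^ 2 / p.1 ^ 2 * varKernel η η1 p.2 p.1) :=
        hI.swap
      have hJ' : J = ∫ s, ∫ x, |(f (x + s) - f x) ^ 2 / s ^ 2 * varKernel η η1 x s| := by
        rw [hJ, Measure.volume_eq_prod]
        exact (integral_prod _ hI.norm).trans (integral_integral_swap hI.norm)
      have hout : Integrable fun s =>
          ∫ x, |(f (x + s) - f x) ^ 2 / s ^ 2 * varKernel η η1 x s| :=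
        hsw.norm.integral_prod_left
      rw [hJ', ← Real.norm_eq_abs]
      refine (norm_integral_le_of_norm_le hout.integrableOn
        (Eventually.of_forall fun s => norm_integral_le_integral_norm
          fun x => (f (x + s) - f x) ^ 2 / s ^ 2 * varKernel η η1 x s)).trans ?_
      exact setIntegral_le_integral hout
        (Eventually.of_forall fun s => integral_nonneg fun x => abs_nonneg _)
  have hrhs : Tendsto (fun δ : ℝ =>
      (1 / 2) * ((∫ x, |η x|) * (8 * δ ^ 2 + C * C' * δ)) + J) (𝓝[>] 0) (𝓝 J) := by
    refine tendsto_nhdsWithin_of_tendsto_nhds ?_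
    have : Continuous fun δ : ℝ =>
      (1 / 2) * ((∫ x, |η x|) * (8 * δ ^ 2 + C * C' * δ)) + J := by fun_prop
    simpa using this.tendsto 0
  exact le_of_tendsto_of_tendsto hlim.abs hrhs hbd

/-! ### Removing the cutoff -/

lemma abs_varKernel_le {η η1 : ℝ → ℝ} {K : ℝ} (hη : ∀ x, HasDerivAt η (η1 x) x)
    (hK : ∀ x, |η1 x| ≤ K) (x s : ℝ) : |varKernel η η1 x s| ≤ 2 * K := by
  have hK0 : 0 ≤ K := (abs_nonneg _).trans (hK 0)
  have h1 : |(η x - η (x + s)) / s| ≤ K := by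
    rcases eq_or_ne s 0 with rfl | hs
    · simpa using hK0
    have := convex_univ.norm_image_sub_le_of_norm_hasDerivWithin_le
      (fun y _ => (hη y).hasDerivWithinAt) (fun y _ => hK y) (mem_univ (x + s)) (mem_univ x)
    rw [Real.norm_eq_abs, Real.norm_eq_abs, show x - (x + s) = -s by ring, abs_neg] at this
    rwa [abs_div, div_le_iff₀ (abs_pos.2 hs)]
  have h2 := abs_le.1 (hK x)
  have h3 := abs_le.1 (hK (x + s))
  have h4 := abs_le.1 h1
  unfold varKernel
  exact abs_le.2 ⟨by linarith, by linarith⟩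

lemma tendsto_div_atTop_nhds_zero (x : ℝ) : Tendsto (fun R : ℝ => x / R) atTop (𝓝 0) :=
  tendsto_const_nhds.div_atTop tendsto_id

/-- A smooth cutoff `ψ` of the identity field; the fields `R ψ(x / R)` approximate the generator
of dilations. -/
lemma exists_cutoff_field : ∃ ψ ψ1 : ℝ → ℝ, ∃ K : ℝ, (∀ x, HasDerivAt ψ (ψ1 x) x) ∧
    Continuous ψ1 ∧ HasCompactSupport ψ ∧ HasCompactSupport ψ1 ∧ (∀ x, |ψ1 x| ≤ K) ∧
    ∀ᶠ x in 𝓝 0, ψ x = x ∧ ψ1 x = 1 := by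
  let χ : ContDiffBump (0 : ℝ) := ⟨1, 2, one_pos, one_lt_two⟩
  have hc : ContDiff ℝ 1 fun x => x * χ x := contDiff_id.mul χ.contDiff
  have hs : HasCompactSupport fun x => x * χ x := χ.hasCompactSupport.mul_left
  have h1 : Continuous (deriv fun x => x * χ x) := hc.continuous_deriv le_rfl
  obtain ⟨K, hK⟩ := h1.bounded_above_of_compact_support hs.deriv
  refine ⟨fun x => x * χ x, deriv fun x => x * χ x, K,
    fun x => (hc.differentiable one_ne_zero x).hasDerivAt, h1, hs, hs.deriv, hK, ?_⟩
  have e : ∀ᶠ x in 𝓝 (0 : ℝ), (fun x => x * χ x) x = x := by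
    filter_upwards [χ.eventuallyEq_one] with x hx
    simp [hx]
  filter_upwards [e, e.eventually_nhds] with x hx hx'
  refine ⟨hx, ?_⟩
  have : (fun x => x * χ x) =ᶠ[𝓝 x] fun x => x := hx'
  rw [this.deriv_eq]; simp

/-- Pohozaev's argument: an integrable `e` with `e' = -f' g` has vanishing total integral. The
work of the approximate dilation fields vanishes in the limit because the variation kernel of
an exact dilation is identically zero. -/
lemma integral_eq_zero_of_work {f f1 g e : ℝ → ℝ} (hd : ∀ x, HasDerivAt f (f1 x) x)
    (hc1 : ContDiff ℝ 1 f1) (hb : ∀ x, |f x| ≤ 1)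
    (hg : ∀ x : ℝ, Tendsto (fun ε : ℝ => (1 / π) * ∫ t in {t : ℝ | ε < |t - x|},
      (f t - f x) / (t - x) ^ 2) (𝓝[>] 0) (𝓝 (g x)))
    (hU : Integrable fun p : ℝ × ℝ => (f (p.1 + p.2) - f p.1) ^ 2 / p.2 ^ 2)
    (he : ∀ x, HasDerivAt e (-(f1 x * g x)) x) (hgc : Continuous fun x => f1 x * g x)
    (hei : Integrable e) : ∫ x, e x = 0 := by
  obtain ⟨ψ, ψ1, K, hψ, hψ1, hs, hs1, hK, h0⟩ := exists_cutoff_field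
  have hψc : Continuous ψ := continuous_iff_continuousAt.2 fun x => (hψ x).continuousAt
  have hec : Continuous e := continuous_iff_continuousAt.2 fun x => (he x).continuousAt
  have hfc : Continuous f := continuous_iff_continuousAt.2 fun x => (hd x).continuousAt
  set U : ℝ × ℝ → ℝ := fun p => (f (p.1 + p.2) - f p.1) ^ 2 / p.2 ^ 2 with hUdef
  let η : ℝ → ℝ → ℝ := fun R x => R * ψ (x / R)
  let η1 : ℝ → ℝ → ℝ := fun R x => ψ1 (x / R)
  have hη : ∀ R, 0 < R → ∀ x, HasDerivAt (η R) (η1 R x) x := fun R hR x => by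
    have := ((hψ (x / R)).comp x ((hasDerivAt_id x).div_const R)).const_mul R
    exact this.congr_deriv (by simp only [η1]; field_simp)
  have hηc : ∀ R, Continuous (η R) := fun R => by fun_prop
  have hη1c : ∀ R, Continuous (η1 R) := fun R => by fun_prop
  have hcs : ∀ R : ℝ, 0 < R → ∀ u : ℝ → ℝ, HasCompactSupport u →
      HasCompactSupport fun x => u (x / R) := fun R hR u hu => by
    simpa [div_eq_mul_inv, Function.comp_def] using
      hu.comp_homeomorph (Homeomorph.mulRight₀ R⁻¹ (inv_ne_zero hR.ne'))
  have hηs : ∀ R, 0 < R → HasCompactSupport (η R) := fun R hR => (hcs R hR ψ hs).mul_left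
  have hη1s : ∀ R, 0 < R → HasCompactSupport (η1 R) := fun R hR => hcs R hR ψ1 hs1
  have hkm : ∀ R, Measurable fun p : ℝ × ℝ => varKernel (η R) (η1 R) p.1 p.2 := fun R => by
    have := (hηc R).measurable
    have := (hη1c R).measurable
    unfold varKernel
    fun_prop
  have hkb : ∀ R, 0 < R → ∀ p : ℝ × ℝ, |varKernel (η R) (η1 R) p.1 p.2| ≤ 2 * K :=
    fun R hR p => abs_varKernel_le (hη R hR) (fun x => hK _) _ _
  have hUi : ∀ R, 0 < R → Integrable fun p : ℝ × ℝ =>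
      U p * varKernel (η R) (η1 R) p.1 p.2 := fun R hR =>
    hU.mul_bdd (hkm R).aestronglyMeasurable (Eventually.of_forall (hkb R hR))
  -- `∫ η' e = ∫ η f' g` by parts, and `abs_work_le` bounds the right side
  have key : ∀ R, 0 < R → |∫ x, η1 R x * e x|
      ≤ (1 / π) * ∫ p : ℝ × ℝ, |U p * varKernel (η R) (η1 R) p.1 p.2| := by
    intro R hR
    have hw := abs_work_le hd hc1 hb (hη R hR) (hη1c R) (hηs R hR) (hη1s R hR) hg (hUi R hR)
    have ibp : ∫ x, η R x * (-(f1 x * g x)) = - ∫ x, η1 R x * e x :=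
      integral_mul_deriv_eq_deriv_mul_of_integrable (fun x _ => hη R hR x) (fun x _ => he x)
        (((hηc R).mul hgc.neg).integrable_of_hasCompactSupport (hηs R hR).mul_right)
        (((hη1c R).mul hec).integrable_of_hasCompactSupport (hη1s R hR).mul_right)
        (((hηc R).mul hec).integrable_of_hasCompactSupport (hηs R hR).mul_right)
    have e1 : (∫ x, η R x * f1 x * (π * g x)) = π * ∫ x, η1 R x * e x := by
      rw [← neg_neg (∫ x, η1 R x * e x), ← ibp, mul_neg, ← integral_const_mul, ← integral_neg]
      congr 1; ext x; ring
    rw [e1, abs_mul, abs_of_pos pi_pos] at hw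
    rw [one_div, ← div_eq_inv_mul, le_div_iff₀ pi_pos, mul_comm]
    exact hw
  have hpos : ∀ᶠ R : ℝ in atTop, 0 < R := eventually_gt_atTop 0
  have lim1 : Tendsto (fun R => ∫ x, η1 R x * e x) atTop (𝓝 (∫ x, e x)) := by
    refine tendsto_integral_filter_of_dominated_convergence (fun x => K * |e x|)
      (Eventually.of_forall fun R => ((hη1c R).mul hec).aestronglyMeasurable)
      (Eventually.of_forall fun R => Eventually.of_forall fun x => ?_)
      (hei.norm.const_mul K) (Eventually.of_forall fun x => ?_)
    · rw [Real.norm_eq_abs, abs_mul]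
      exact mul_le_mul_of_nonneg_right (hK _) (abs_nonneg _)
    · refine tendsto_const_nhds.congr' ?_
      filter_upwards [(tendsto_div_atTop_nhds_zero x).eventually h0] with R hR
      simp only [η1, hR.2, one_mul]
  have lim2 : Tendsto (fun R => ∫ p : ℝ × ℝ, |U p * varKernel (η R) (η1 R) p.1 p.2|) atTop
      (𝓝 (∫ _ : ℝ × ℝ, (0 : ℝ))) := by
    refine tendsto_integral_filter_of_dominated_convergence (fun p => |U p| * (2 * K))
      ?_ ?_ (hU.norm.mul_const _) (Eventually.of_forall fun p => ?_)
    · filter_upwards [hpos] with R hR using (hUi R hR).norm.aestronglyMeasurable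
    · filter_upwards [hpos] with R hR
      refine Eventually.of_forall fun p => ?_
      rw [Real.norm_eq_abs, abs_abs, abs_mul]
      exact mul_le_mul_of_nonneg_left (hkb R hR p) (abs_nonneg _)
    · -- for large `R` the field is `x ↦ x` at both points, so the kernel is exactly zero
      refine tendsto_const_nhds.congr' ?_
      filter_upwards [hpos, (tendsto_div_atTop_nhds_zero p.1).eventually h0,
        (tendsto_div_atTop_nhds_zero (p.1 + p.2)).eventually h0] with R hR a b
      rcases eq_or_ne p.2 0 with h | h
      · simp [hUdef, h]
      · have : varKernel (η R) (η1 R) p.1 p.2 = 0 := by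
          simp only [varKernel, η, η1, a.1, a.2, b.1, b.2]
          field_simp
          ring
        simp [this]
  rw [integral_zero] at lim2
  have hle := le_of_tendsto_of_tendsto lim1.abs (lim2.const_mul (1 / π))
    (hpos.mono fun R hR => key R hR)
  rw [mul_zero] at hle
  exact abs_nonpos_iff.1 hle

/-! ### Finite energy and the conclusion -/

lemma Wpot_nonneg (h θ : ℝ) : 0 ≤ Wpot h θ := by
  unfold Wpot kparam
  rcases le_total h 1 with h1 | h1
  · rw [min_eq_left h1]; nlinarith [sq_nonneg (cos θ - h)]
  · rw [min_eq_right h1]; nlinarith [cos_le_one θ]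

/-- Finite energy gives separate integrability of the exchange, anisotropy and
stray-field densities, the last one in the coordinates `(x, t - x)`. -/
lemma integrable_of_energy {h : ℝ} {φ : ℝ → ℝ} (hc : ContDiff ℝ 1 φ) (hE : energy h φ < ⊤) :
    Integrable (fun x => (deriv φ x) ^ 2) ∧ Integrable (fun x => Wpot h (φ x)) ∧
    Integrable fun p : ℝ × ℝ => (cos (φ (p.1 + p.2)) - cos (φ p.1)) ^ 2 / p.2 ^ 2 := by
  have hφ : Continuous φ := hc.continuous
  have hφ1 : Continuous (deriv φ) := hc.continuous_deriv le_rfl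
  have hW : Continuous fun x => Wpot h (φ x) := by unfold Wpot; fun_prop
  unfold energy at hE
  rw [ENNReal.add_lt_top] at hE
  have hE1 := ENNReal.lt_top_of_mul_ne_top_right hE.1.ne (by simp)
  have hE2 := ENNReal.lt_top_of_mul_ne_top_right hE.2.ne (by simp [pi_pos])
  have hsum : Integrable fun x => (deriv φ x) ^ 2 + 2 * Wpot h (φ x) := by
    refine ⟨by fun_prop, ?_⟩
    rw [hasFiniteIntegral_iff_ofReal (Eventually.of_forall fun x => ?_)]
    · exact hE1
    · have := Wpot_nonneg h (φ x); simp only [Pi.zero_apply]; positivity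
  refine ⟨hsum.mono' (by fun_prop) (Eventually.of_forall fun x => ?_),
    hsum.mono' hW.aestronglyMeasurable (Eventually.of_forall fun x => ?_), ?_⟩
  · have := Wpot_nonneg h (φ x)
    rw [Real.norm_of_nonneg (sq_nonneg _)]; linarith
  · have := Wpot_nonneg h (φ x)
    rw [Real.norm_of_nonneg this]; nlinarith [sq_nonneg (deriv φ x)]
  · have hm : Measurable fun p : ℝ × ℝ =>
        (cos (φ (p.1 + p.2)) - cos (φ p.1)) ^ 2 / p.2 ^ 2 := by fun_prop
    refine ⟨hm.aestronglyMeasurable, ?_⟩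
    rw [hasFiniteIntegral_iff_ofReal (Eventually.of_forall fun x => by
      simp only [Pi.zero_apply]; positivity), Measure.volume_eq_prod,
      lintegral_prod _ hm.ennreal_ofReal.aemeasurable]
    refine lt_of_eq_of_lt (lintegral_congr fun x => ?_) hE2
    -- substitute `t = x + s` in the inner integral
    rw [← lintegral_add_left_eq_self
      (fun t => ENNReal.ofReal ((cos (φ x) - cos (φ t)) ^ 2 / (x - t) ^ 2)) x]
    refine lintegral_congr fun s => ?_
    rw [show x - (x + s) = -s by ring, neg_sq, ← neg_sq (cos (φ x) - _), neg_sub]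

/-- **Pohozaev identity.** For a `C²` admissible critical point of `E_h`,
the exchange energy equals the anisotropy energy. -/
theorem pohozaev (h : ℝ) (h0 : 0 ≤ h) (h1 : h ≠ 1) (φ g : ℝ → ℝ)
    (hφ2 : ContDiff ℝ 2 φ) (hadm : Admissible h φ)
    (hg : ∀ x : ℝ, Tendsto (fun ε : ℝ =>
        (1/Real.pi) * ∫ t in {t : ℝ | ε < |t - x|},
          (Real.cos (φ t) - Real.cos (φ x)) / (t - x)^2)
        (𝓝[>] (0:ℝ)) (𝓝 (g x)))
    (hEL : ∀ x : ℝ, deriv (deriv φ) x = (h - Real.cos (φ x) + g x) * Real.sin (φ x)) :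
    (∫ x : ℝ, (deriv φ x)^2) = 2 * ∫ x : ℝ, Wpot h (φ x) := by
  obtain ⟨i1, i2, i3⟩ := integrable_of_energy hadm.1 hadm.2.2.2
  have hφ1 : ContDiff ℝ 1 (deriv φ) :=
    ((contDiff_succ_iff_deriv (n := 1)).1 (by simpa [one_add_one_eq_two] using hφ2)).2.2
  have dφ : ∀ x, HasDerivAt φ (deriv φ x) x := fun x =>
    (hφ2.differentiable two_ne_zero x).hasDerivAt
  have dφ1 : ∀ x, HasDerivAt (deriv φ) (deriv (deriv φ) x) x := fun x =>
    (hφ1.differentiable one_ne_zero x).hasDerivAt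
  have hφc : Continuous φ := hφ2.continuous
  have hφ1c : Continuous (deriv φ) := hφ1.continuous
  have hφ2c : Continuous (deriv (deriv φ)) := hφ1.continuous_deriv le_rfl
  have hW : ∀ x, HasDerivAt (fun x => Wpot h (φ x))
      ((h - cos (φ x)) * sin (φ x) * deriv φ x) x := fun x => by
    unfold Wpot
    have c := (dφ x).cos
    have := (((c.pow 2).sub (c.const_mul (2 * h))).add_const (2 * h * kparam h)
      |>.sub_const (kparam h ^ 2)).const_mul (1 / 2)
    refine this.congr_deriv ?_
    simp only [Nat.cast_ofNat]
    ring
  -- multiplying the Euler-Lagrange equation by `φ'` gives `e' = -(cos φ)' g` for the density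
  -- `e = φ'² / 2 - W(φ)`
  have hz := integral_eq_zero_of_work (f := fun x => cos (φ x))
    (f1 := fun x => -sin (φ x) * deriv φ x) (g := g)
    (e := fun x => (deriv φ x) ^ 2 / 2 - Wpot h (φ x))
    (fun x => (dφ x).cos)
    (((contDiff_sin.comp hadm.1).neg).mul hφ1) (fun x => abs_cos_le_one _) hg i3
    (fun x => by
      refine ((((dφ1 x).pow 2).div_const 2).sub (hW x)).congr_deriv ?_
      rw [hEL x]
      simp only [Nat.cast_ofNat]
      ring)
    (by
      have : (fun x => -sin (φ x) * deriv φ x * g x)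
          = fun x => ((h - cos (φ x)) * sin (φ x) - deriv (deriv φ) x) * deriv φ x := by
        ext x; rw [hEL x]; ring
      rw [this]; fun_prop)
    ((i1.div_const 2).sub i2)
  rw [integral_sub (i1.div_const 2) i2, integral_div] at hz
  linarith
end
end
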